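/- arXiv:1309.5588 — 10 statements merged into one kernel-verified Lean document; each statement's English description precedes it below -/
import Mathlib

section
/- Let S be a finite commutative semigroup. Then D(S) = d(S) + 1, where D(S) is the large Davenport constant and d(S) is the small Davenport constant. -/
namespace EGZ

variable {S : Type}

/-- `rep a n = (n+1)·a`, the (n+1)-fold sum of `a` with itself (defined for semigroups,
where the 0-fold sum is unavailable). -/
def rep [AddCommSemigroup S] (a : S) : ℕ → S
  | 0 => a
  | n + 1 => rep a n + a

/-- The sum of all terms of a sequence (= multiset) over the semigroup `S`, computed in
`WithZero S` (i.e. `S` with an extra identity element `0` adjoined); the empty sequence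
has sum `0`, and a nonempty sequence has sum `↑s` where `s ∈ S` is its genuine sum. -/
def mSum [AddCommSemigroup S] (T : Multiset S) : WithZero S :=
  (T.map (fun s => (s : WithZero S))).sum

/-- `σ(A) = σ(B)`, with the paper's convention: the empty sequence is regarded as having
sum equal to the identity element `e` of `S`, whenever `S` has an identity element. -/
def EqSum [AddCommSemigroup S] (A B : Multiset S) : Prop :=
  mSum A = mSum B ∨
    ∃ e : S, (∀ a : S, e + a = a) ∧
      ((mSum A = 0 ∧ mSum B = (e : WithZero S)) ∨
        (mSum A = (e : WithZero S) ∧ mSum B = 0))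

/-- A sequence `T` over `S` is reducible if some proper subsequence `B` of `T`
satisfies `σ(B) = σ(T)`. -/
def Reducible [AddCommSemigroup S] (T : Multiset S) : Prop :=
  ∃ B : Multiset S, B < T ∧ EqSum B T

/-- The (large) Davenport constant `D(S)`: the smallest `ℓ` such that every sequence over
`S` of length at least `ℓ` is reducible. -/
noncomputable def DavC (S : Type) [AddCommSemigroup S] : ℕ :=
  sInf {ℓ : ℕ | ∀ T : Multiset S, ℓ ≤ Multiset.card T → Reducible T}

/-- The property defining the small Davenport constant: `ℓ` is admissible if for every `m`
and every `c₁, …, c_m ∈ S` there is `J ⊆ [1, m]` with `|J| ≤ ℓ` and `Σ_{j=1}^m c_j = Σ_{j∈J} c_j`. -/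
def SmallDavProp (S : Type) [AddCommSemigroup S] (ℓ : ℕ) : Prop :=
  ∀ (m : ℕ) (c : Fin m → S), ∃ J : Finset (Fin m),
    J.card ≤ ℓ ∧ EqSum (J.val.map c) ((Finset.univ : Finset (Fin m)).val.map c)

/-- The small Davenport constant `d(S)`. -/
noncomputable def smallDavC (S : Type) [AddCommSemigroup S] : ℕ :=
  sInf {ℓ : ℕ | SmallDavProp S ℓ}

/-- The period of an element `a ∈ S`: the least `t > 0` such that `r·a = (r+t)·a`
for some `r > 0`. -/
noncomputable def period [AddCommSemigroup S] (a : S) : ℕ :=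
  sInf {t : ℕ | 0 < t ∧ ∃ k : ℕ, rep a (k + t) = rep a k}

/-- `exp(S)`: the least common multiple of the periods of all elements of `S`. -/
noncomputable def expS (S : Type) [AddCommSemigroup S] [Fintype S] : ℕ :=
  (Finset.univ : Finset S).lcm (fun a => period a)

/-- `κ(S) = ⌈|S| / exp(S)⌉ · exp(S)`. -/
noncomputable def kappa (S : Type) [AddCommSemigroup S] [Fintype S] : ℕ :=
  ((Fintype.card S + expS S - 1) / expS S) * expS S

/-- `E(S)`: the smallest positive integer `ℓ` such that every sequence `T` over `S` of
length at least `ℓ` contains a subsequence `T'` with `|T| - |T'| = κ(S)` and `σ(T') = σ(T)`. -/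
noncomputable def EC (S : Type) [AddCommSemigroup S] [Fintype S] : ℕ :=
  sInf {ℓ : ℕ | 0 < ℓ ∧ ∀ T : Multiset S, ℓ ≤ Multiset.card T →
    ∃ B : Multiset S, B ≤ T ∧ Multiset.card T - Multiset.card B = kappa S ∧ EqSum B T}

end EGZ

namespace EGZ

variable {S : Type}

lemma eqSum_trans [AddCommSemigroup S] {A B C : Multiset S} (h1 : EqSum A B) (h2 : EqSum B C) :
    EqSum A C := by
  rcases h1 with h1 | ⟨e, he, ⟨h1, h1'⟩ | ⟨h1, h1'⟩⟩
  · unfold EqSum at *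
    rw [h1]; exact h2
  · rcases h2 with h2 | ⟨f, hf, ⟨h2, h2'⟩ | ⟨h2, h2'⟩⟩
    · exact Or.inr ⟨e, he, Or.inl ⟨h1, h2 ▸ h1'⟩⟩
    · rw [h1'] at h2
      exact absurd h2 WithZero.coe_ne_zero
    · exact Or.inl (h1.trans h2'.symm)
  · rcases h2 with h2 | ⟨f, hf, ⟨h2, h2'⟩ | ⟨h2, h2'⟩⟩
    · exact Or.inr ⟨e, he, Or.inr ⟨h1, h2 ▸ h1'⟩⟩
    · have hef : e = f := by
        have := he f
        rw [add_comm, hf] at this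
        exact this
      subst hef
      exact Or.inl (h1.trans h2'.symm)
    · rw [h1'] at h2
      exact absurd h2.symm WithZero.coe_ne_zero

lemma exists_sub_map {α β : Type} (c : α → β) (s : Multiset α) (B : Multiset β)
    (h : B ≤ s.map c) : ∃ t ≤ s, t.map c = B := by
  classical
  induction s using Multiset.induction_on generalizing B with
  | empty =>
    refine ⟨0, le_rfl, ?_⟩
    simpa using (h.antisymm (by simp)).symm
  | cons a s ih =>
    rw [Multiset.map_cons] at h
    by_cases hB : c a ∈ B
    · obtain ⟨B', rfl⟩ := Multiset.exists_cons_of_mem hB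
      obtain ⟨t, ht, rfl⟩ := ih B' ((Multiset.cons_le_cons_iff _).1 h)
      exact ⟨a ::ₘ t, Multiset.cons_le_cons _ ht, by simp⟩
    · obtain ⟨t, ht, rfl⟩ := ih B ((Multiset.le_cons_of_notMem hB).1 h)
      exact ⟨t, ht.trans (Multiset.le_cons_self _ _), rfl⟩

lemma exists_short [AddCommSemigroup S] (l : ℕ)
    (h : ∀ T : Multiset S, l + 1 ≤ Multiset.card T → Reducible T) (T : Multiset S) :
    ∃ B ≤ T, Multiset.card B ≤ l ∧ EqSum B T := by
  induction T using Multiset.strongInductionOn with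
  | ih T ih =>
    by_cases hT : Multiset.card T ≤ l
    · exact ⟨T, le_rfl, hT, Or.inl rfl⟩
    · obtain ⟨B, hB, hs⟩ := h T (by omega)
      obtain ⟨C, hC, hc, hs'⟩ := ih B hB
      exact ⟨C, hC.trans hB.le, hc, eqSum_trans hs' hs⟩

lemma smallDavProp_iff [AddCommSemigroup S] (l : ℕ) :
    SmallDavProp S l ↔ ∀ T : Multiset S, l + 1 ≤ Multiset.card T → Reducible T := by
  constructor
  · intro h T hT
    obtain ⟨L, rfl⟩ := Quot.exists_rep T
    obtain ⟨J, hJ, hs⟩ := h L.length L.get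
    have e : (Finset.univ : Finset (Fin L.length)).val.map L.get = (L : Multiset S) := by
      simp
    rw [e] at hs
    refine ⟨J.val.map L.get, lt_of_le_of_ne ?_ ?_, hs⟩
    · change _ ≤ (L : Multiset S)
      rw [← e]
      exact Multiset.map_le_map (Finset.val_le_iff.2 (Finset.subset_univ J))
    · intro h'
      rw [← h', Multiset.card_map, Finset.card_val] at hT
      omega
  · intro h m c
    obtain ⟨B, hB, hc, hs⟩ := exists_short l h ((Finset.univ : Finset (Fin m)).val.map c)
    obtain ⟨t, ht, rfl⟩ := exists_sub_map c _ B hB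
    refine ⟨⟨t, Multiset.nodup_of_le ht Finset.univ.nodup⟩, ?_, hs⟩
    simpa using hc

lemma exists_bound [AddCommSemigroup S] [Fintype S] :
    ∃ l : ℕ, ∀ T : Multiset S, l + 1 ≤ Multiset.card T → Reducible T := by
  classical
  haveI : Finite (WithZero S) := inferInstanceAs (Finite (Option S))
  haveI : Fintype (WithZero S) := Fintype.ofFinite _
  set K := Fintype.card (WithZero S) with hK
  refine ⟨Fintype.card S * K, fun T hT => ?_⟩
  have : ∃ a : S, K ≤ T.count a := by
    by_contra! hcon
    have h1 : ∑ a : S, T.count a = Multiset.card T :=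
      Multiset.sum_count_eq_card (fun a _ => Finset.mem_univ a)
    have h2 : ∑ a : S, T.count a ≤ ∑ _a : S, K := Finset.sum_le_sum fun a _ => (hcon a).le
    simp at h2
    omega
  obtain ⟨a, ha⟩ := this
  obtain ⟨i, j, hij, hs⟩ : ∃ i j : Fin (K + 1), i < j ∧
      (i : ℕ) • (a : WithZero S) = (j : ℕ) • (a : WithZero S) := by
    obtain ⟨x, y, hxy, h⟩ := Fintype.exists_ne_map_eq_of_card_lt
      (fun i : Fin (K + 1) => (i : ℕ) • (a : WithZero S)) (by simp [← hK])
    rcases lt_or_gt_of_ne hxy with h' | h'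
    · exact ⟨x, y, h', h⟩
    · exact ⟨y, x, h', h.symm⟩
  have hj : Multiset.replicate j a ≤ T := by
    rw [← Multiset.le_count_iff_replicate_le]
    have := j.2
    omega
  obtain ⟨R, rfl⟩ := Multiset.le_iff_exists_add.1 hj
  have hij' : (i : ℕ) < j := hij
  refine ⟨Multiset.replicate i a + R, ?_, Or.inl ?_⟩
  · refine lt_of_le_of_ne ?_ ?_
    · gcongr
    · intro h
      have := congrArg Multiset.card h
      simp at this
      omega
  · simp [mSum, hs]

end EGZ

/-- For a finite commutative semigroup `S`, `D(S) = d(S) + 1`. -/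
theorem largeDavenport_eq_smallDavenport_add_one (S : Type) [AddCommSemigroup S] [Fintype S] :
    EGZ.DavC S = EGZ.smallDavC S + 1 := by
  set A := {ℓ : ℕ | ∀ T : Multiset S, ℓ ≤ Multiset.card T → EGZ.Reducible T} with hA
  have hiff : ∀ l, EGZ.SmallDavProp S l ↔ l + 1 ∈ A := fun l => EGZ.smallDavProp_iff l
  have h0 : 0 ∉ A := by
    intro h
    obtain ⟨B, hB, -⟩ := h 0 (by simp)
    exact absurd hB (by simp)
  obtain ⟨l, hl⟩ := EGZ.exists_bound (S := S)
  have hne : A.Nonempty := ⟨l + 1, hl⟩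
  have hne' : {ℓ : ℕ | EGZ.SmallDavProp S ℓ}.Nonempty := ⟨l, (hiff l).2 hl⟩
  change sInf A = sInf {ℓ : ℕ | EGZ.SmallDavProp S ℓ} + 1
  apply le_antisymm
  · exact Nat.sInf_le ((hiff _).1 (Nat.sInf_mem hne'))
  · have hm := Nat.sInf_mem hne
    obtain ⟨k, hk⟩ : ∃ k, sInf A = k + 1 :=
      Nat.exists_eq_succ_of_ne_zero fun h => h0 (h ▸ hm)
    rw [hk] at hm ⊢
    exact Nat.succ_le_succ (Nat.sInf_le ((hiff k).2 hm))
end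

section
/- Let S be a finite commutative monoid (a finite commutative semigroup with identity element 0_S). Then E(S) ≥ D(S) + κ(S) − 1. -/
namespace EGZ

theorem rep_eq {S : Type} [AddCommMonoid S] (a : S) (n : ℕ) : rep a n = (n + 1) • a := by
  induction n with
  | zero => simp [rep]
  | succ n ih => rw [rep, ih, succ_nsmul a (n + 1)]

theorem mSum_cons {S : Type} [AddCommMonoid S] (a : S) (T : Multiset S) :
    mSum (a ::ₘ T) = (((a ::ₘ T).sum : S) : WithZero S) := by
  induction T using Multiset.induction_on generalizing a with
  | empty => simp [mSum]
  | cons b T ih =>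
    have h : mSum (a ::ₘ b ::ₘ T) = (a : WithZero S) + mSum (b ::ₘ T) := by
      simp [mSum]
    rw [h, ih, Multiset.sum_cons a, WithZero.coe_add]

theorem eqSum_iff {S : Type} [AddCommMonoid S] (A B : Multiset S) :
    EqSum A B ↔ A.sum = B.sum := by
  have h0 : mSum (0 : Multiset S) = 0 := by simp [mSum]
  have hid : ∀ e : S, (∀ a : S, e + a = a) → e = 0 := fun e he => by
    have := he 0
    simpa using this
  have hz : ∀ a : S, (0 : S) + a = a := zero_add
  unfold EqSum
  induction A using Multiset.induction_on with
  | empty =>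
    induction B using Multiset.induction_on with
    | empty => simp
    | cons b B _ =>
      rw [h0, mSum_cons]
      constructor
      · rintro (h | ⟨e, he, ⟨_, h⟩ | ⟨h, _⟩⟩)
        · exact absurd h.symm WithZero.coe_ne_zero
        · rw [WithZero.coe_inj] at h
          rw [h, hid e he]; simp
        · exact absurd h.symm WithZero.coe_ne_zero
      · intro h
        refine Or.inr ⟨0, hz, Or.inl ⟨rfl, ?_⟩⟩
        rw [← h]; simp
  | cons a A _ =>
    induction B using Multiset.induction_on with
    | empty =>
      rw [h0, mSum_cons]
      constructor
      · rintro (h | ⟨e, he, ⟨h, _⟩ | ⟨h, _⟩⟩)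
        · exact absurd h WithZero.coe_ne_zero
        · exact absurd h WithZero.coe_ne_zero
        · rw [WithZero.coe_inj] at h
          rw [h, hid e he]; simp
      · intro h
        refine Or.inr ⟨0, hz, Or.inr ⟨?_, rfl⟩⟩
        rw [h]; simp
    | cons b B _ =>
      rw [mSum_cons, mSum_cons]
      constructor
      · rintro (h | ⟨e, he, ⟨h, _⟩ | ⟨_, h⟩⟩)
        · exact WithZero.coe_inj.1 h
        · exact absurd h WithZero.coe_ne_zero
        · exact absurd h WithZero.coe_ne_zero
      · intro h
        exact Or.inl (by rw [h])

theorem period_spec {S : Type} [AddCommMonoid S] [Fintype S] (a : S) :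
    0 < period a ∧ ∃ k : ℕ, rep a (k + period a) = rep a k := by
  have hne : {t : ℕ | 0 < t ∧ ∃ k : ℕ, rep a (k + t) = rep a k}.Nonempty := by
    obtain ⟨x, y, hxy, h⟩ := Finite.exists_ne_map_eq_of_infinite (rep a)
    rcases lt_or_gt_of_ne hxy with hl | hl
    · exact ⟨y - x, by omega, x, by rw [h]; congr 1; omega⟩
    · exact ⟨x - y, by omega, y, by rw [← h]; congr 1; omega⟩
  exact Nat.sInf_mem hne

theorem expS_pos (S : Type) [AddCommMonoid S] [Fintype S] : 0 < expS S := by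
  rw [Nat.pos_iff_ne_zero]
  intro h
  rw [expS, Finset.lcm_eq_zero_iff] at h
  obtain ⟨a, _, ha⟩ := h
  exact (period_spec a).1.ne' ha

theorem kappa_pos (S : Type) [AddCommMonoid S] [Fintype S] : 0 < kappa S := by
  have h1 := expS_pos S
  have h2 : 0 < Fintype.card S := Fintype.card_pos_iff.2 ⟨0⟩
  exact Nat.mul_pos (Nat.div_pos (by omega) h1) h1

theorem period_dvd_kappa {S : Type} [AddCommMonoid S] [Fintype S] (a : S) :
    period a ∣ kappa S :=
  Dvd.dvd.mul_left (Finset.dvd_lcm (Finset.mem_univ a)) _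

theorem exists_bound_s2 (S : Type) [AddCommMonoid S] [Fintype S] :
    ∃ K : ℕ, ∀ (a : S) (n : ℕ), K ≤ n → (n + kappa S) • a = n • a := by
  choose k hk using fun a : S => (period_spec a).2
  refine ⟨∑ a, (k a + 1), fun a n hn => ?_⟩
  have h1 : k a + 1 ≤ n :=
    (Finset.single_le_sum (f := fun a => k a + 1) (fun _ _ => Nat.zero_le _)
      (Finset.mem_univ a)).trans hn
  have h2 : ∀ m, k a + 1 ≤ m → (m + period a) • a = m • a := by
    intro m hm
    obtain ⟨d, rfl⟩ := Nat.exists_eq_add_of_le hm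
    have h := hk a
    rw [rep_eq, rep_eq] at h
    rw [show k a + 1 + d + period a = (k a + period a + 1) + d by ring, add_nsmul, h,
      ← add_nsmul]
  obtain ⟨c, hc⟩ := period_dvd_kappa a
  rw [hc]
  clear hc
  induction c with
  | zero => simp
  | succ c ih =>
    rw [Nat.mul_succ, ← add_assoc, h2 _ (by omega), ih]

theorem EC_nonempty (S : Type) [AddCommMonoid S] [Fintype S] :
    {ℓ : ℕ | 0 < ℓ ∧ ∀ T : Multiset S, ℓ ≤ Multiset.card T →
      ∃ B : Multiset S, B ≤ T ∧ Multiset.card T - Multiset.card B = kappa S ∧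
        EqSum B T}.Nonempty := by
  classical
  obtain ⟨K, hK⟩ := exists_bound_s2 S
  refine ⟨Fintype.card S * (K + kappa S) + 1, Nat.succ_pos _, fun T hT => ?_⟩
  have hex : ∃ a : S, K + kappa S ≤ T.count a := by
    by_contra! hcon
    have h1 : ∑ a : S, T.count a = Multiset.card T :=
      Multiset.sum_count_eq_card (fun a _ => Finset.mem_univ a)
    have h2 : ∑ a : S, T.count a ≤ ∑ _a : S, (K + kappa S) :=
      Finset.sum_le_sum (fun a _ => (hcon a).le)
    simp only [Finset.sum_const, Finset.card_univ, smul_eq_mul] at h2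
    omega
  obtain ⟨a, ha⟩ := hex
  obtain ⟨R, hR⟩ := Multiset.le_iff_exists_add.1 (Multiset.le_count_iff_replicate_le.1 ha)
  refine ⟨Multiset.replicate K a + R, ?_, ?_, ?_⟩
  · rw [hR, Multiset.replicate_add, add_assoc]
    gcongr
    exact Multiset.le_add_left _ _
  · rw [hR]; simp; omega
  · rw [eqSum_iff, hR]
    simp [hK a K le_rfl]

end EGZ

/-- For a finite commutative monoid `S` (a finite commutative semigroup
with an identity element `0_S`), `E(S) ≥ D(S) + κ(S) − 1`. -/
theorem E_ge_D_add_kappa_sub_one (S : Type) [AddCommMonoid S] [Fintype S] :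
    EGZ.DavC S + EGZ.kappa S - 1 ≤ EGZ.EC S := by
  classical
  have hκ := EGZ.kappa_pos S
  obtain ⟨hpos, hE⟩ := Nat.sInf_mem (EGZ.EC_nonempty S)
  change 0 < EGZ.EC S at hpos
  change ∀ T : Multiset S, EGZ.EC S ≤ Multiset.card T → _ at hE
  by_contra! hlt
  by_cases hD : EGZ.DavC S = 0
  · obtain ⟨B, _, h, _⟩ := hE (Multiset.replicate (EGZ.EC S) 0) (by simp)
    simp at h
    omega
  have hnot : EGZ.DavC S - 1 ∉
      {ℓ : ℕ | ∀ T : Multiset S, ℓ ≤ Multiset.card T → EGZ.Reducible T} :=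
    Nat.notMem_of_lt_sInf (by change _ < EGZ.DavC S; omega)
  simp only [Set.mem_setOf_eq, not_forall] at hnot
  obtain ⟨T, hT, hirr⟩ := hnot
  obtain ⟨B, hB, hc, hs⟩ := hE (T + Multiset.replicate (EGZ.kappa S - 1) 0) (by simp; omega)
  rw [EGZ.eqSum_iff] at hs
  apply hirr
  have hle : B - Multiset.replicate (EGZ.kappa S - 1) 0 ≤ T := tsub_le_iff_right.2 hB
  have hcard := Multiset.card_le_card hB
  rw [Multiset.card_add, Multiset.card_replicate] at hcard hc
  -- split `B` as a part in `T` and a part among the zeros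
  set C := B - Multiset.replicate (EGZ.kappa S - 1) 0 with hC
  have hCB : C ≤ B := tsub_le_self
  refine ⟨C, lt_of_le_of_ne hle ?_, ?_⟩
  · intro h
    have := Multiset.card_le_card hCB
    rw [h] at this
    omega
  · rw [EGZ.eqSum_iff]
    have h1 : B = C + B ∩ Multiset.replicate (EGZ.kappa S - 1) 0 :=
      (Multiset.sub_add_inter _ _).symm
    have h2 : (B ∩ Multiset.replicate (EGZ.kappa S - 1) (0 : S)).sum = 0 := by
      apply Multiset.sum_eq_zero
      intro x hx
      exact Multiset.eq_of_mem_replicate (Multiset.mem_inter.1 hx).2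
    have h3 : B.sum = C.sum := by
      conv_lhs => rw [h1]
      rw [Multiset.sum_add, h2, add_zero]
    rw [← h3, hs]
    simp
end

section
/- Let N be a finite commutative nilsemigroup. Then E(N) ≤ D(N) + κ(N) − 1. -/
/-- A commutative nilsemigroup: a commutative semigroup with a zero element `z`
(`z + a = z` for all `a`) in which every element `x` is nilpotent, i.e. `n·x = z`
for some `n > 0` (`EGZ.rep x n = (n+1)·x`). -/
def IsNilsemigroup (N : Type) [AddCommSemigroup N] : Prop :=
  ∃ z : N, (∀ a : N, z + a = z) ∧ ∀ x : N, ∃ n : ℕ, EGZ.rep x n = z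

namespace EGZ

variable {N : Type} [AddCommSemigroup N]

theorem mSum_add' (A B : Multiset N) : mSum (A + B) = mSum A + mSum B := by
  simp [mSum]

theorem mSum_cons' (a : N) (B : Multiset N) : mSum (a ::ₘ B) = (a : WithZero N) + mSum B := by
  simp [mSum]

theorem zero_absorb {z : N} (hz : ∀ a : N, z + a = z) (w : WithZero N) :
    (z : WithZero N) + w = z := by
  induction w with
  | zero => simp
  | coe a => rw [← WithZero.coe_add, hz]

theorem add_rep_eq {s : WithZero N} {c : N} (h : s + c = s) (n : ℕ) :
    s + (rep c n : N) = s := by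
  induction n with
  | zero => exact h
  | succ n ih => rw [rep, WithZero.coe_add, ← add_assoc, ih, h]

theorem eq_zero_of_add {z : N} (hz : ∀ a : N, z + a = z)
    (hn : ∀ x : N, ∃ n : ℕ, rep x n = z) {s : WithZero N} {c : N} (h : s + c = s) :
    s = z := by
  obtain ⟨n, h1⟩ := hn c
  have h2 := add_rep_eq h n
  rw [h1, add_comm, zero_absorb hz] at h2
  exact h2.symm

theorem chain {z : N} (hz : ∀ a : N, z + a = z)
    (hn : ∀ x : N, ∃ n : ℕ, rep x n = z) (T : Multiset N) :
    mSum T ≠ z → ∃ F : Finset (WithZero N), F.card = Multiset.card T + 1 ∧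
      (z : WithZero N) ∉ F ∧ ∀ x ∈ F, ∃ y, x + y = mSum T := by
  classical
  induction T using Multiset.induction_on with
  | empty =>
    intro _
    refine ⟨{0}, by simp, by simp, ?_⟩
    intro x hx
    rw [Finset.mem_singleton] at hx
    exact ⟨mSum 0, by rw [hx, zero_add]⟩
  | cons a T ih =>
    intro h
    rw [mSum_cons'] at h
    have hs : mSum T ≠ z := by
      intro h1
      apply h
      rw [h1, add_comm, zero_absorb hz]
    obtain ⟨F, h1, h2, h3⟩ := ih hs
    have hmem : (a : WithZero N) + mSum T ∉ F := by
      intro h4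
      obtain ⟨y, hy⟩ := h3 _ h4
      obtain ⟨c, hc⟩ : ∃ c : N, (c : WithZero N) = (a : WithZero N) + y := by
        induction y with
        | zero => exact ⟨a, by simp⟩
        | coe b => exact ⟨a + b, by rw [WithZero.coe_add]⟩
      apply hs
      refine eq_zero_of_add hz hn (c := c) ?_
      rw [hc]
      rw [← add_assoc, add_comm (mSum T)]
      exact hy
    refine ⟨insert ((a : WithZero N) + mSum T) F, ?_, ?_, ?_⟩
    · rw [Finset.card_insert_of_notMem hmem, h1, Multiset.card_cons]
    · rw [Finset.mem_insert]
      rintro (h5 | h5)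
      · exact h h5.symm
      · exact h2 h5
    · intro x hx
      rw [mSum_cons']
      rcases Finset.mem_insert.1 hx with rfl | hx
      · exact ⟨0, add_zero _⟩
      · obtain ⟨y, hy⟩ := h3 x hx
        exact ⟨y + a, by rw [← add_assoc, hy, add_comm]⟩

theorem long_sum [Fintype N] {z : N} (hz : ∀ a : N, z + a = z)
    (hn : ∀ x : N, ∃ n : ℕ, rep x n = z) (T : Multiset N)
    (hT : Fintype.card N ≤ Multiset.card T) : mSum T = z := by
  classical
  by_contra h
  obtain ⟨F, h1, h2, -⟩ := chain hz hn T h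
  have : (insert (z : WithZero N) F).card ≤ Fintype.card (Option N) := by
    exact Finset.card_le_univ (α := Option N) _
  rw [Finset.card_insert_of_notMem h2, Fintype.card_option] at this
  omega

theorem expS_eq [Fintype N] {z : N} (hz : ∀ a : N, z + a = z)
    (hn : ∀ x : N, ∃ n : ℕ, rep x n = z) : expS N = 1 := by
  have hp : ∀ a : N, period a = 1 := by
    intro a
    have hm : 1 ∈ {t : ℕ | 0 < t ∧ ∃ k : ℕ, rep a (k + t) = rep a k} := by
      obtain ⟨k, hk⟩ := hn a
      exact ⟨one_pos, k, by rw [rep, hk, hz]⟩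
    have h1 := Nat.sInf_le hm
    have h2 := (Nat.sInf_mem ⟨1, hm⟩).1
    unfold period
    omega
  apply Nat.dvd_one.1
  unfold expS
  apply Finset.lcm_dvd
  intro a _
  rw [hp]

theorem kappa_eq [Fintype N] {z : N} (hz : ∀ a : N, z + a = z)
    (hn : ∀ x : N, ∃ n : ℕ, rep x n = z) : kappa N = Fintype.card N := by
  simp [kappa, expS_eq hz hn]

theorem rep_ident {e : N} (he : ∀ a : N, e + a = a) (n : ℕ) : rep e n = e := by
  induction n with
  | zero => rfl
  | succ n ih => rw [rep, ih, he]

/-- Either the semigroup is trivial or `EqSum` is plain equality of sums. -/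
theorem eqSum_cases {z : N} (hz : ∀ a : N, z + a = z)
    (hn : ∀ x : N, ∃ n : ℕ, rep x n = z) :
    (∀ a : N, a = z) ∨ ∀ A B : Multiset N, EqSum A B → mSum A = mSum B := by
  by_cases h : ∃ e : N, ∀ a : N, e + a = a
  · left
    obtain ⟨e, he⟩ := h
    obtain ⟨n, h1⟩ := hn e
    rw [rep_ident he] at h1
    intro a
    rw [← hz a, ← h1, he]
  · right
    rintro A B (h1 | ⟨e, he, -⟩)
    · exact h1
    · exact absurd ⟨e, he⟩ h

theorem eqSum_trivial {z : N} (hz : ∀ a : N, a = z) (A B : Multiset N) : EqSum A B := by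
  have hid : ∀ a : N, z + a = a := fun a => (hz _).trans (hz a).symm
  have key : ∀ w : WithZero N, w = 0 ∨ w = z := by
    intro w
    induction w with
    | zero => exact Or.inl rfl
    | coe a => right; rw [hz a]
  rcases key (mSum A) with h1 | h1 <;> rcases key (mSum B) with h2 | h2
  · left; rw [h1, h2]
  · exact Or.inr ⟨z, hid, Or.inl ⟨h1, h2⟩⟩
  · exact Or.inr ⟨z, hid, Or.inr ⟨h1, h2⟩⟩
  · left; rw [h1, h2]

theorem exists_sub (T : Multiset N) : ∀ k ≤ Multiset.card T, ∀ B ≤ T, Multiset.card B ≤ k →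
    ∃ C, B ≤ C ∧ C ≤ T ∧ Multiset.card C = k := by
  intro k hk B hB hc
  obtain ⟨R, rfl⟩ := Multiset.le_iff_exists_add.1 hB
  rw [Multiset.card_add] at hk
  obtain ⟨Q, hQ, hQc⟩ : ∃ Q ≤ R, Multiset.card Q = k - Multiset.card B := by
    induction R using Quotient.inductionOn with
    | _ l =>
      refine ⟨(l.take (k - Multiset.card B) : List N), ?_, ?_⟩
      · exact Multiset.coe_le.2 (List.take_sublist _ _).subperm
      · simp only [Multiset.quot_mk_to_coe, Multiset.coe_card, List.length_take] at hk ⊢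
        omega
  refine ⟨B + Q, Multiset.le_add_right _ _, by gcongr, ?_⟩
  rw [Multiset.card_add]
  omega

theorem dav_red [Fintype N] {z : N} (hz : ∀ a : N, z + a = z)
    (hn : ∀ x : N, ∃ n : ℕ, rep x n = z) (T : Multiset N)
    (hT : DavC N ≤ Multiset.card T) : Reducible T := by
  have hm : Fintype.card N + 1 ∈
      {ℓ : ℕ | ∀ T : Multiset N, ℓ ≤ Multiset.card T → Reducible T} := by
    intro T hT
    obtain ⟨B, -, hB, hc⟩ := exists_sub T (Fintype.card N) (by omega) 0 (Multiset.zero_le _)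
      (by simp)
    refine ⟨B, lt_of_le_of_ne hB ?_, Or.inl ?_⟩
    · rintro rfl
      omega
    · rw [long_sum hz hn B (by omega), long_sum hz hn T (by omega)]
  exact Nat.sInf_mem ⟨_, hm⟩ T hT

theorem dav_pos [Fintype N] {z : N} (hz : ∀ a : N, z + a = z)
    (hn : ∀ x : N, ∃ n : ℕ, rep x n = z) : 0 < DavC N := by
  by_contra h
  obtain ⟨B, hB, -⟩ := dav_red hz hn 0 (by omega)
  exact absurd (Multiset.card_lt_card hB) (by simp)

theorem exists_short_s4 [Fintype N] {z : N} (hz : ∀ a : N, z + a = z)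
    (hn : ∀ x : N, ∃ n : ℕ, rep x n = z)
    (he : ∀ A B : Multiset N, EqSum A B → mSum A = mSum B) :
    ∀ (m : ℕ) (T : Multiset N), Multiset.card T = m →
      ∃ B ≤ T, Multiset.card B < DavC N ∧ mSum B = mSum T := by
  intro m
  induction m using Nat.strong_induction_on with
  | _ m ih =>
    intro T hT
    by_cases h : Multiset.card T < DavC N
    · exact ⟨T, le_refl _, h, rfl⟩
    · obtain ⟨B, hB, hs⟩ := dav_red hz hn T (by omega)
      obtain ⟨C, hC, h1, h2⟩ := ih _ (hT ▸ Multiset.card_lt_card hB) B rfl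
      exact ⟨C, hC.trans hB.le, h1, h2.trans (he _ _ hs)⟩

end EGZ

/-- For a finite commutative nilsemigroup `N`, `E(N) ≤ D(N) + κ(N) − 1`. -/
theorem E_le_of_nilsemigroup (N : Type) [AddCommSemigroup N] [Fintype N]
    (hnil : IsNilsemigroup N) :
    EGZ.EC N ≤ EGZ.DavC N + EGZ.kappa N - 1 := by
  obtain ⟨z, hz, hn⟩ := hnil
  have hD := EGZ.dav_pos hz hn
  have hk := EGZ.kappa_eq hz hn
  have hc : 0 < Fintype.card N := Fintype.card_pos_iff.2 ⟨z⟩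
  apply Nat.sInf_le
  refine ⟨by omega, ?_⟩
  intro T hT
  rcases EGZ.eqSum_cases hz hn with h | h
  · obtain ⟨C, -, hC, hCc⟩ := EGZ.exists_sub T (Multiset.card T - EGZ.kappa N) (by omega) 0
      (Multiset.zero_le _) (by simp)
    exact ⟨C, hC, by omega, EGZ.eqSum_trivial h _ _⟩
  · obtain ⟨B, hB, h1, h2⟩ := EGZ.exists_short_s4 hz hn h _ T rfl
    obtain ⟨C, hBC, hC, hCc⟩ := EGZ.exists_sub T (Multiset.card T - EGZ.kappa N) (by omega) B hB
      (by omega)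
    refine ⟨C, hC, by omega, Or.inl ?_⟩
    have h3 := EGZ.long_sum hz hn T (by omega)
    obtain ⟨R, rfl⟩ := Multiset.le_iff_exists_add.1 hBC
    rw [EGZ.mSum_add', h2, h3, EGZ.zero_absorb hz]
end

section
/- Let N be a finite commutative nilsemigroup with zero element ∞_N, and let a, b ∈ N with a <_H b (that is, a ≤_H b but not b ≤_H a, where ≤_H is the Green's preorder). Then the annihilator ∞:b = {x ∈ N⁰ : x + b = ∞_N} is a proper subset of ∞:a = {x ∈ N⁰ : x + a = ∞_N}. -/
/-- The Green preorder on a commutative semigroup: `a ≤_H b` iff `a = b + t` for some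
`t ∈ N⁰` (i.e. `a = b`, corresponding to the adjoined identity, or `a = b + t` with `t ∈ N`). -/
def GreenLe {N : Type} [AddCommSemigroup N] (a b : N) : Prop :=
  a = b ∨ ∃ t : N, a = b + t

/-- The annihilator `∞ : a = {x ∈ N⁰ : x + a = ∞}`, as a subset of
`N⁰ = WithZero N` (`N` with an identity `0` adjoined). -/
def ann {N : Type} [AddCommSemigroup N] (z a : N) : Set (WithZero N) :=
  {x : WithZero N | x + (a : WithZero N) = (z : WithZero N)}

/-- Let `N` be a finite commutative nilsemigroup with zero element `z`,
and let `a, b ∈ N` with `a <_H b`.  Then `∞:b` is a proper subset of `∞:a`. -/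
theorem ann_ssubset_of_greenLt (N : Type) [AddCommSemigroup N] [Fintype N]
    (z : N) (hz : ∀ a : N, z + a = z) (hnil : ∀ x : N, ∃ n : ℕ, EGZ.rep x n = z)
    (a b : N) (hab : GreenLe a b) (hba : ¬ GreenLe b a) :
    ann z b ⊂ ann z a := by
  obtain h | ⟨t, rfl⟩ := hab
  · exact absurd (Or.inl h.symm) hba
  have hz' : ∀ c : N, c + z = z := fun c => by rw [add_comm, hz]
  have hb : b ≠ z := by
    rintro rfl
    exact hba (Or.inr ⟨b, (hz' _).symm⟩)
  refine (Set.ssubset_iff_of_subset ?_).2 ?_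
  · intro x hx
    have hx' : x + (b : WithZero N) = (z : WithZero N) := hx
    change x + ((b + t : N) : WithZero N) = (z : WithZero N)
    rw [WithZero.coe_add, ← add_assoc, hx', ← WithZero.coe_add, hz]
  · have hex : ∃ n : ℕ, b + EGZ.rep t n = z := by
      obtain ⟨n, hn⟩ := hnil t
      exact ⟨n, by rw [hn, hz']⟩
    classical
    have h1 := Nat.find_spec hex
    have h2 : ∀ m, m < Nat.find hex → b + EGZ.rep t m ≠ z := fun m hm => Nat.find_min hex hm
    generalize Nat.find hex = k at h1 h2
    cases k with
    | zero =>
      refine ⟨0, ?_, ?_⟩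
      · change (0 : WithZero N) + ((b + t : N) : WithZero N) = (z : WithZero N)
        rw [zero_add]
        exact congrArg _ h1
      · intro h
        have h' : (0 : WithZero N) + (b : WithZero N) = (z : WithZero N) := h
        rw [zero_add] at h'
        exact hb (WithZero.coe_inj.1 h')
    | succ m =>
      refine ⟨(EGZ.rep t m : N), ?_, ?_⟩
      · change ((EGZ.rep t m : N) : WithZero N) + ((b + t : N) : WithZero N) = (z : WithZero N)
        rw [← WithZero.coe_add, add_left_comm]
        exact congrArg _ h1
      · intro h
        have h' : ((EGZ.rep t m : N) : WithZero N) + (b : WithZero N) = (z : WithZero N) := h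
        rw [← WithZero.coe_add, add_comm] at h'
        exact h2 m (Nat.lt_succ_self m) (WithZero.coe_inj.1 h')
end

section
/- Let S be a finite commutative semigroup and let I be a nonempty ideal of S. Then D(S) ≥ D(S/I), where S/I is the Rees quotient semigroup of S by I. -/
theorem EGZ.mSum_map_hom {S Q : Type} [AddCommSemigroup S] [AddCommSemigroup Q]
    (f : AddHom S Q) (T : Multiset S) :
    EGZ.mSum (T.map f) = WithZero.mapAddHom f (EGZ.mSum T) := by
  induction T using Multiset.induction_on with
  | empty => simp [EGZ.mSum]
  | cons a T ih =>
    simp only [EGZ.mSum, Multiset.map_cons] at ih ⊢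
    simp_all

/-- In a finite commutative semigroup every long enough sequence is reducible. -/
theorem EGZ.reducible_of_long {S : Type} [AddCommSemigroup S] [Fintype S] (T : Multiset S)
    (hT : Fintype.card S + 1 ≤ Multiset.card T) : EGZ.Reducible T := by
  classical
  induction T using Quotient.inductionOn with
  | _ L =>
  change Fintype.card S + 1 ≤ L.length at hT
  change EGZ.Reducible (L : Multiset S)
  let g : ℕ → Option S := fun i => (EGZ.mSum (L.take i : Multiset S) : WithZero S)
  obtain ⟨x, hx, y, hy, hxy, hg⟩ :=
    Finset.exists_ne_map_eq_of_card_lt_of_maps_to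
      (s := Finset.range (L.length + 1)) (t := (Finset.univ : Finset (Option S)))
      (by simp; omega) (f := g) (by intro a _; simp)
  wlog hlt : x < y generalizing x y
  · exact this y hy x hx hxy.symm hg.symm (by omega)
  simp only [Finset.mem_range] at hx hy
  have hg' : EGZ.mSum (L.take x : Multiset S) = EGZ.mSum (L.take y : Multiset S) := hg
  have hsplit : (L : Multiset S) = (L.take y : Multiset S) + (L.drop y : Multiset S) := by
    rw [Multiset.coe_add, List.take_append_drop]
  have hadd : ∀ A B : Multiset S, EGZ.mSum (A + B) = EGZ.mSum A + EGZ.mSum B := by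
    intro A B
    simp [EGZ.mSum]
  refine ⟨(L.take x : Multiset S) + (L.drop y : Multiset S), ?_, Or.inl ?_⟩
  · refine lt_of_le_of_ne ?_ ?_
    · conv_rhs => rw [hsplit]
      refine add_le_add_left ?_ _
      exact (List.take_sublist_take_left hlt.le).subperm
    · intro h
      have := congrArg Multiset.card h
      simp at this
      omega
  · rw [hadd, hg', ← hadd, ← hsplit]


/-- Let `S` be a finite commutative semigroup and `I` a nonempty ideal of
`S`.  Then `D(S) ≥ D(S/I)`, where the Rees quotient `S/I` is presented as a finite
commutative semigroup `Q` together with a surjective additive map `π : S → Q` whose kernel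
congruence is exactly the Rees congruence of `I` (`π a = π b ↔ a = b ∨ (a ∈ I ∧ b ∈ I)`). -/
theorem davenport_reesQuotient_le (S Q : Type) [AddCommSemigroup S] [Fintype S]
    [AddCommSemigroup Q] [Fintype Q]
    (I : Set S) (hne : I.Nonempty) (hideal : ∀ a ∈ I, ∀ s : S, a + s ∈ I)
    (π : S → Q) (hsurj : Function.Surjective π)
    (hhom : ∀ a b : S, π (a + b) = π a + π b)
    (hker : ∀ a b : S, π a = π b ↔ (a = b ∨ (a ∈ I ∧ b ∈ I))) :
    EGZ.DavC Q ≤ EGZ.DavC S := by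
  have hmem : EGZ.DavC S ∈ {ℓ : ℕ | ∀ T : Multiset S, ℓ ≤ Multiset.card T → EGZ.Reducible T} :=
    Nat.sInf_mem ⟨Fintype.card S + 1, fun T hT => EGZ.reducible_of_long T hT⟩
  refine Nat.sInf_le ?_
  intro T hT
  let f : AddHom S Q := ⟨π, hhom⟩
  obtain ⟨U, rfl⟩ : ∃ U : Multiset S, U.map f = T := by
    refine ⟨T.map (Function.surjInv hsurj), ?_⟩
    rw [Multiset.map_map]
    conv_rhs => rw [← Multiset.map_id T]
    exact Multiset.map_congr rfl (fun q _ => Function.surjInv_eq hsurj q)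
  rw [Multiset.card_map] at hT
  obtain ⟨B, hB, hE⟩ := hmem U hT
  refine ⟨B.map f, Multiset.map_lt_map hB, ?_⟩
  unfold EGZ.EqSum
  rw [EGZ.mSum_map_hom, EGZ.mSum_map_hom]
  rcases hE with h | ⟨e, he, h⟩
  · exact Or.inl (by rw [h])
  · refine Or.inr ⟨f e, ?_, ?_⟩
    · intro q
      obtain ⟨s, rfl⟩ := hsurj q
      exact (hhom e s).symm.trans (congrArg π (he s))
    · rcases h with ⟨h1, h2⟩ | ⟨h1, h2⟩
      · exact Or.inl (by rw [h1, h2]; exact ⟨map_zero _, WithZero.mapAddHom_coe f e⟩)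
      · exact Or.inr (by rw [h1, h2]; exact ⟨WithZero.mapAddHom_coe f e, map_zero _⟩)
end

section
/- Let N be a finite commutative nilsemigroup. Then L(N) ≤ D(N) ≤ L(N) + 1, where L(N) is the nilpotency index of N and D(N) is the Davenport constant of N. -/
/-- The `t`-fold sumset `N + ⋯ + N` of a commutative semigroup `N`:
all sums of sequences of exactly `t` elements of `N`. -/
def tFold (N : Type) [AddCommSemigroup N] (t : ℕ) : Set N :=
  {s : N | ∃ T : Multiset N, Multiset.card T = t ∧ EGZ.mSum T = (s : WithZero N)}

/-- The nilpotency index `L(N)`: the least `t > 0` such that the `t`-fold sumset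
`N + ⋯ + N` has exactly one element. -/
noncomputable def nilIndex (N : Type) [AddCommSemigroup N] : ℕ :=
  sInf {t : ℕ | 0 < t ∧ ∃ a : N, tFold N t = {a}}

theorem aux_mSum_eq {N : Type} [AddCommSemigroup N] (A : Multiset N) :
    EGZ.mSum A = (Multiset.map (fun a : N => (WithZero.coe a : WithZero N)) A).sum := by
  simp [EGZ.mSum]

theorem aux_mSum_add {N : Type} [AddCommSemigroup N] (A B : Multiset N) :
    EGZ.mSum (A + B) = EGZ.mSum A + EGZ.mSum B := by
  simp [EGZ.mSum]

theorem aux_rep {N : Type} [AddCommSemigroup N] (x : N) (n : ℕ) :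
    ((EGZ.rep x n : N) : WithZero N) = (n + 1) • (x : WithZero N) := by
  induction n with
  | zero => simp [EGZ.rep]
  | succ k ih => rw [EGZ.rep, WithZero.coe_add, ih, ← succ_nsmul]

theorem aux_absorb {N : Type} [AddCommSemigroup N] (z : N) (hz : ∀ a : N, z + a = z)
    (w : WithZero N) : (z : WithZero N) + w = z := by
  induction w using WithZero.recZeroCoe with
  | zero => simp
  | coe a => rw [← WithZero.coe_add, hz]

theorem aux_le {N : Type} [AddCommSemigroup N] (z : N) (hz : ∀ a : N, z + a = z)
    {A B : Multiset N} (h : A ≤ B) (hA : EGZ.mSum A = (z : WithZero N)) :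
    EGZ.mSum B = (z : WithZero N) := by
  obtain ⟨C, rfl⟩ := Multiset.le_iff_exists_add.1 h
  rw [aux_mSum_add, hA, aux_absorb z hz]

theorem aux_ne {N : Type} [AddCommSemigroup N] (T : Multiset N) (hT : T ≠ 0) :
    ∃ s : N, EGZ.mSum T = (s : WithZero N) := by
  induction T using Multiset.induction_on with
  | empty => exact absurd rfl hT
  | cons a T ih =>
    by_cases h : T = 0
    · exact ⟨a, by simp [h, EGZ.mSum]⟩
    · obtain ⟨s, hs⟩ := ih h
      refine ⟨a + s, ?_⟩
      rw [WithZero.coe_add, ← hs]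
      simp [EGZ.mSum]

theorem aux_nilp {N : Type} [AddCommSemigroup N] [Fintype N] (z : N)
    (hz : ∀ a : N, z + a = z) (hn : ∀ x : N, ∃ n : ℕ, EGZ.rep x n = z) :
    ∃ t : ℕ, 0 < t ∧ ∀ T : Multiset N, t ≤ Multiset.card T →
      EGZ.mSum T = (z : WithZero N) := by
  classical
  choose f hf using hn
  refine ⟨∑ x : N, f x + 1, Nat.succ_pos _, fun T hT => ?_⟩
  have hex : ∃ x : N, f x < T.count x := by
    by_contra! hcon
    have h1 : ∑ x : N, T.count x = Multiset.card T :=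
      Multiset.sum_count_eq_card (fun a _ => Finset.mem_univ a)
    have h2 : ∑ x : N, T.count x ≤ ∑ x : N, f x := Finset.sum_le_sum fun x _ => hcon x
    omega
  obtain ⟨x, hx⟩ := hex
  refine aux_le z hz (Multiset.le_count_iff_replicate_le.1 hx) ?_
  rw [aux_mSum_eq, Multiset.map_replicate, Multiset.sum_replicate, ← hf x, aux_rep]

/-- For a finite commutative nilsemigroup `N`, `L(N) ≤ D(N) ≤ L(N) + 1`. -/
theorem nilIndex_le_davenport_le (N : Type) [AddCommSemigroup N] [Fintype N]
    (hnil : IsNilsemigroup N) :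
    nilIndex N ≤ EGZ.DavC N ∧ EGZ.DavC N ≤ nilIndex N + 1 := by
  classical
  obtain ⟨z, hz, hn⟩ := hnil
  -- zero lies in every t-fold sumset
  have hzmem : ∀ t, 0 < t → z ∈ tFold N t := by
    intro t ht
    refine ⟨Multiset.replicate t z, by simp, ?_⟩
    refine aux_le z hz (A := {z}) ?_ (by simp [EGZ.mSum])
    rw [Multiset.singleton_le, Multiset.mem_replicate]
    exact ⟨by omega, rfl⟩
  have hne : {t : ℕ | 0 < t ∧ ∃ a : N, tFold N t = {a}}.Nonempty := by
    obtain ⟨t, ht, h⟩ := aux_nilp z hz hn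
    refine ⟨t, ht, z, Set.Subset.antisymm ?_ (by simpa using hzmem t ht)⟩
    rintro s ⟨T, hT, hs⟩
    rw [h T hT.ge] at hs
    exact (WithZero.coe_inj.1 hs).symm
  obtain ⟨hLpos, a, ha⟩ := Nat.sInf_mem hne
  change 0 < nilIndex N at hLpos
  change tFold N (nilIndex N) = {a} at ha
  have haz : z = a := by simpa [ha] using hzmem _ hLpos
  subst haz
  have hL : ∀ T : Multiset N, nilIndex N ≤ Multiset.card T →
      EGZ.mSum T = (z : WithZero N) := by
    intro T hT
    obtain ⟨A, hA⟩ := Multiset.card_pos_iff_exists_mem.1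
      (show 0 < Multiset.card (Multiset.powersetCard (nilIndex N) T) by
        rw [Multiset.card_powersetCard]; exact Nat.choose_pos hT)
    obtain ⟨hA, hc⟩ := Multiset.mem_powersetCard.1 hA
    refine aux_le z hz hA ?_
    obtain ⟨s, hs⟩ := aux_ne A (by rintro rfl; simp at hc; omega)
    have : s ∈ tFold N (nilIndex N) := ⟨A, hc, hs⟩
    rw [ha] at this
    rw [hs, Set.mem_singleton_iff.1 this]
  have hmem : nilIndex N + 1 ∈
      {l : ℕ | ∀ T : Multiset N, l ≤ Multiset.card T → EGZ.Reducible T} := by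
    intro T hT
    obtain ⟨x, hx⟩ := Multiset.card_pos_iff_exists_mem.1 (show 0 < Multiset.card T by omega)
    refine ⟨T.erase x, Multiset.erase_lt.2 hx, Or.inl ?_⟩
    rw [hL T (by omega), hL _ (by rw [Multiset.card_erase_of_mem hx, Nat.pred_eq_sub_one]; omega)]
  refine ⟨?_, Nat.sInf_le hmem⟩
  have hD := Nat.sInf_mem ⟨_, hmem⟩
  change ∀ T : Multiset N, EGZ.DavC N ≤ Multiset.card T → EGZ.Reducible T at hD
  by_contra! hlt
  rcases Nat.eq_zero_or_pos (nilIndex N - 1) with h0 | h0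
  · obtain ⟨B, hB, -⟩ := hD 0 (by omega)
    exact absurd hB (by simp)
  have hnot : nilIndex N - 1 ∉ {t : ℕ | 0 < t ∧ ∃ a : N, tFold N t = {a}} :=
    Nat.notMem_of_lt_sInf (show nilIndex N - 1 < nilIndex N by omega)
  have hT : ∃ T : Multiset N, Multiset.card T = nilIndex N - 1 ∧
      EGZ.mSum T ≠ (z : WithZero N) := by
    by_contra! hcon
    refine hnot ⟨h0, z, Set.Subset.antisymm ?_ (by simpa using hzmem _ h0)⟩
    rintro s ⟨T, hT, hs⟩
    rw [hcon T hT] at hs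
    exact (WithZero.coe_inj.1 hs).symm
  obtain ⟨T, hTc, hTz⟩ := hT
  obtain ⟨s, hs⟩ := aux_ne T (by rintro rfl; simp at hTc; omega)
  -- nothing but zero is fixed by a translation
  have key : ∀ s c : N, s + c = s → s = z := by
    intro s c hsc
    obtain ⟨n, hcn⟩ := hn c
    have : ∀ n, s + EGZ.rep c n = s := by
      intro n
      induction n with
      | zero => exact hsc
      | succ k ih => rw [EGZ.rep, ← add_assoc, ih, hsc]
    have h := this n
    rw [hcn, add_comm, hz] at h
    exact h.symm
  have hsz : s ≠ z := by rintro rfl; exact hTz hs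
  obtain ⟨B, hB, hE⟩ := hD T (by omega)
  rcases hE with hE | ⟨e, he, ⟨-, h⟩ | ⟨-, h⟩⟩
  · obtain ⟨C, rfl⟩ := Multiset.le_iff_exists_add.1 hB.le
    obtain ⟨c, hc⟩ := aux_ne C (by rintro rfl; simp at hB)
    have h1 := aux_mSum_add B C
    rw [hE, hs, hc, ← WithZero.coe_add, WithZero.coe_inj] at h1
    exact hsz (key s c h1.symm)
  · rw [hs, WithZero.coe_inj] at h
    subst h
    exact hsz (key s s (he s))
  · rw [hs] at h
    exact WithZero.coe_ne_zero h
end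

section
/- Let N be a finite commutative nilsemigroup with zero element ∞_N, and let T be a sequence over N with σ(T) ≠ ∞_N. Then T is irreducible, i.e. no proper subsequence B of T satisfies σ(B) = σ(T). -/
/-- Let `N` be a finite commutative nilsemigroup with zero element `z`,
and let `T` be a sequence over `N` with `σ(T) ≠ z`.  Then `T` is irreducible: no proper
subsequence `B` of `T` satisfies `σ(B) = σ(T)`. -/
theorem irreducible_of_sum_ne_zeroElem (N : Type) [AddCommSemigroup N] [Fintype N]
    (z : N) (hz : ∀ a : N, z + a = z) (hnil : ∀ x : N, ∃ n : ℕ, EGZ.rep x n = z)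
    (T : Multiset N) (hT : EGZ.mSum T ≠ (z : WithZero N)) :
    ¬ EGZ.Reducible T := by
  classical
  have key : ∀ U : Multiset N, U ≠ 0 → ∃ u : N, EGZ.mSum U = (u : WithZero N) := by
    intro U
    induction U using Multiset.induction_on with
    | empty => intro h; exact absurd rfl h
    | cons a s ih =>
      intro _
      by_cases hs : s = 0
      · subst hs
        exact ⟨a, by simp [EGZ.mSum]⟩
      · obtain ⟨u, hu⟩ := ih hs
        refine ⟨a + u, ?_⟩
        rw [WithZero.coe_add, ← hu]
        simp [EGZ.mSum]
  rintro ⟨B, hBT, h⟩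
  obtain ⟨U, rfl⟩ := Multiset.le_iff_exists_add.1 hBT.le
  have hU : U ≠ 0 := by
    rintro rfl
    simp at hBT
  obtain ⟨u, hu⟩ := key U hU
  have hadd : EGZ.mSum (B + U) = EGZ.mSum B + EGZ.mSum U := by simp [EGZ.mSum]
  rcases h with h | ⟨e, he, ⟨_, h⟩ | ⟨_, h⟩⟩
  · by_cases hB : B = 0
    · subst hB
      rw [zero_add, hu] at h
      simp [EGZ.mSum] at h
    · obtain ⟨b, hb⟩ := key B hB
      rw [hadd, hu, hb, ← WithZero.coe_add, WithZero.coe_inj] at h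
      have hr : ∀ n, b + EGZ.rep u n = b := by
        intro n
        induction n with
        | zero => exact h.symm
        | succ n ih =>
          change b + (EGZ.rep u n + u) = b
          rw [← add_assoc, ih, ← h]
      obtain ⟨n, hn⟩ := hnil u
      have hbz := hr n
      rw [hn, add_comm, hz] at hbz
      apply hT
      rw [hadd, hu, hb, ← WithZero.coe_add, ← h, hbz]
  · have hr : ∀ n, EGZ.rep e n = e := by
      intro n
      induction n with
      | zero => rfl
      | succ n ih =>
        change EGZ.rep e n + e = e
        rw [ih, he]
    obtain ⟨n, hn⟩ := hnil e
    rw [hr] at hn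
    exact hT (by rw [h, hn])
  · have hne : B + U ≠ 0 := by
      intro h0
      exact hU (by simpa using (add_eq_zero.1 h0).2)
    obtain ⟨v, hv⟩ := key _ hne
    rw [hv] at h
    exact WithZero.coe_ne_zero h
end

section
/- Let S = G ∪ N be a finite elementary semigroup (disjoint union of an abelian group G and a nilsemigroup N, where N is an ideal of S, the zero of N is the zero of S, and the identity of G is the identity of S). Then E(S) ≤ D(S) + κ(S) − 1. -/
/-- A finite commutative semigroup `S` is elementary with respect to subsets `G` and `N`:
`S` is the disjoint union of `G` and `N`; `G` is (under the addition of `S`) an abelian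
group whose identity element is an identity element of all of `S`; `N` is an ideal of `S`
and is a nilsemigroup whose zero element `z` is a zero element of all of `S`. -/
def IsElementary (S : Type) [AddCommSemigroup S] (G N : Set S) : Prop :=
  (∀ x : S, x ∈ G ∨ x ∈ N) ∧ Disjoint G N ∧
  (∀ a ∈ G, ∀ b ∈ G, a + b ∈ G) ∧
  (∃ e ∈ G, (∀ a : S, e + a = a) ∧ ∀ a ∈ G, ∃ b ∈ G, a + b = e) ∧
  (∀ a ∈ N, ∀ s : S, a + s ∈ N) ∧
  (∃ z ∈ N, (∀ a : S, z + a = z) ∧ ∀ x ∈ N, ∃ n : ℕ, EGZ.rep x n = z)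


namespace EGZaux
open Multiset

lemma scherk {K : Type*} [AddCommGroup K] [DecidableEq K] (n : ℕ) : ∀ (A B : Finset K), B.card = n →
    (0 : K) ∈ A → (0 : K) ∈ B → (∀ a ∈ A, ∀ b ∈ B, a + b = 0 → a = 0 ∧ b = 0) →
    ∃ C : Finset K, (∀ c ∈ C, ∃ a ∈ A, ∃ b ∈ B, a + b = c) ∧ A.card + B.card ≤ C.card + 1 ∧ 0 ∈ C := by
  induction n using Nat.strong_induction_on with
  | _ n ih =>
    intro A B hB hA0 hB0 huniq
    by_cases hcl : ∀ a ∈ A, ∀ b ∈ B, a + b ∈ A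
    · have hB1 : ∀ b ∈ B, b = 0 := by
        intro b hb
        have hinj : Set.InjOn (fun a => a + b) (A : Set K) := fun x _ y _ h => by simpa using h
        have hsurj := Finset.surj_on_of_inj_on_of_card_le (s := A) (t := A) (fun a _ => a + b)
          (fun a ha => hcl a ha b hb) (fun x y hx hy h => by simpa using h) le_rfl 0 hA0
        obtain ⟨a, ha, h⟩ := hsurj
        exact (huniq a ha b hb h.symm).2
      refine ⟨A, fun c hc => ⟨c, hc, 0, hB0, by simp⟩, ?_, hA0⟩
      have : B.card ≤ 1 := Finset.card_le_one.mpr fun x hx y hy => by rw [hB1 x hx, hB1 y hy]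
      omega
    · push Not at hcl
      obtain ⟨a, ha, b, hb, hab⟩ := hcl
      set A' := A ∪ B.image (fun x => a + x) with hA'
      set B' := B.filter (fun x => a + x ∈ A) with hB'
      have hlt : B'.card < n := by
        rw [← hB]
        apply Finset.card_lt_card
        rw [Finset.ssubset_iff_of_subset (Finset.filter_subset _ _)]
        exact ⟨b, hb, by simp [hab]⟩
      have hcard : A'.card + B'.card = A.card + B.card := by
        have h1 := Finset.card_union_add_card_inter A (B.image (fun x => a + x))
        have h2 : A ∩ B.image (fun x => a + x) = B'.image (fun x => a + x) := by
          ext x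
          simp only [hB', Finset.mem_inter, Finset.mem_image, Finset.mem_filter]
          constructor
          · rintro ⟨h, y, hy, rfl⟩; exact ⟨y, ⟨hy, h⟩, rfl⟩
          · rintro ⟨y, ⟨hy, h⟩, rfl⟩; exact ⟨h, y, hy, rfl⟩
        have hi : Function.Injective (fun x : K => a + x) := add_right_injective a
        rw [h2, Finset.card_image_of_injective _ hi, Finset.card_image_of_injective _ hi] at h1
        exact h1
      obtain ⟨C, hC, hCc, hC0⟩ := ih _ hlt A' B' rfl (by simp [hA', hA0]) (by simp [hB', hB0, ha]) (by
        intro x hx y hy hxy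
        simp only [hA', Finset.mem_union, Finset.mem_image] at hx
        simp only [hB', Finset.mem_filter] at hy
        rcases hx with hx | ⟨z, hz, rfl⟩
        · exact huniq x hx y hy.1 hxy
        · have h1 := huniq (a + y) hy.2 z hz (by rw [← hxy]; abel)
          have h2 := huniq a ha y hy.1 h1.1
          simp [h1.2, h2.1, h2.2])
      refine ⟨C, ?_, by omega, hC0⟩
      intro c hc
      obtain ⟨x, hx, y, hy, hxy⟩ := hC c hc
      simp only [hA', Finset.mem_union, Finset.mem_image] at hx
      simp only [hB', Finset.mem_filter] at hy
      rcases hx with hx | ⟨z, hz, rfl⟩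
      · exact ⟨x, hx, y, hy.1, hxy⟩
      · exact ⟨a + y, hy.2, z, hz, by rw [← hxy]; abel⟩

lemma sumset {K : Type*} [AddCommGroup K] [DecidableEq K] (h : ℕ) : ∀ (T : Multiset K),
    (0 : K) ∉ T → (∀ x, T.count x ≤ h) →
    (∀ W ≤ T, card W ≤ h → W.sum = 0 → W = 0) →
    ∃ C : Finset K, 0 ∈ C ∧ (∀ c ∈ C, ∃ W ≤ T, card W ≤ h ∧ W.sum = c) ∧ card T + 1 ≤ C.card := by
  induction h with
  | zero =>
    intro T _ hc _
    have hT : T = 0 := by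
      ext x; simpa using hc x
    subst hT
    exact ⟨{0}, by simp, by simp, by simp⟩
  | succ h ih =>
    intro T hT0 hc hz
    have hsplit : (T - T.dedup) + T.dedup = T := tsub_add_cancel_of_le (dedup_le T)
    obtain ⟨C, hC0, hC, hCc⟩ := ih (T - T.dedup) (fun hm => hT0 (mem_of_le tsub_le_self hm)) (by
        intro x
        rw [count_sub, count_dedup]
        have := hc x
        split_ifs with hx
        · omega
        · rw [count_eq_zero_of_notMem hx]; omega)
      (fun W hW hWc hWs => hz W (hW.trans tsub_le_self) (by omega) hWs)
    have hext : ∀ W ≤ T - T.dedup, ∀ b ∈ T, b ::ₘ W ≤ T := by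
      intro W hW b hb
      calc b ::ₘ W = W + {b} := by rw [← singleton_add, add_comm]
        _ ≤ (T - T.dedup) + T.dedup := add_le_add hW (by simpa using hb)
        _ = T := hsplit
    obtain ⟨C', h1, h2, h3⟩ := scherk _ C (insert 0 T.toFinset) rfl hC0 (by simp) (by
      intro a ha b hb hab
      rw [Finset.mem_insert, mem_toFinset] at hb
      rcases hb with rfl | hb
      · exact ⟨by simpa using hab, rfl⟩
      · obtain ⟨W, hW, hWc, hWs⟩ := hC a ha
        have := hz (b ::ₘ W) (hext W hW b hb) (by simp; omega) (by simp [hWs, ← hab, add_comm])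
        simp at this)
    refine ⟨C', h3, ?_, ?_⟩
    · intro c hc
      obtain ⟨a, ha, b, hb, rfl⟩ := h1 c hc
      obtain ⟨W, hW, hWc, hWs⟩ := hC a ha
      rw [Finset.mem_insert, mem_toFinset] at hb
      rcases hb with rfl | hb
      · exact ⟨W, hW.trans tsub_le_self, by omega, by simp [hWs]⟩
      · exact ⟨b ::ₘ W, hext W hW b hb, by simp; omega, by simp [hWs, add_comm]⟩
    · rw [Finset.card_insert_of_notMem (by simpa using hT0)] at h2
      have h4 := congrArg card hsplit
      rw [card_add] at h4
      have h5 : T.toFinset.card = card T.dedup := rfl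
      omega

lemma short_zs {K : Type*} [AddCommGroup K] [Fintype K] [DecidableEq K] (h : ℕ) (T : Multiset K)
    (hT : (0 : K) ∉ T) (hc : ∀ x, T.count x ≤ h) (hcard : Fintype.card K ≤ card T) :
    ∃ W ≤ T, card W ≤ h ∧ W.sum = 0 ∧ W ≠ 0 := by
  by_contra! hcon
  obtain ⟨C, -, -, h3⟩ := sumset h T hT hc hcon
  have := C.card_le_univ
  omega

lemma max_zs {K : Type*} [AddCommGroup K] [DecidableEq K] (d : ℕ)
    (hd : ∀ V : Multiset K, d < card V → ∃ W ≤ V, W ≠ 0 ∧ W.sum = 0) (n : ℕ) :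
    ∀ T : Multiset K, card T = n → ∃ W ≤ T, W.sum = 0 ∧ card T ≤ card W + d := by
  induction n using Nat.strong_induction_on with
  | _ n ih =>
    intro T hT
    by_cases hlt : d < card T
    · obtain ⟨W, hW, hW0, hWs⟩ := hd T hlt
      have hp : 0 < card W := card_pos.mpr hW0
      have hcs := card_sub hW
      have hle := card_le_card hW
      obtain ⟨W', hW', hs, hc⟩ := ih (card (T - W)) (by omega) (T - W) rfl
      refine ⟨W' + W, ?_, by simp [hs, hWs], by simp; omega⟩
      calc W' + W ≤ (T - W) + W := by gcongr
        _ = T := tsub_add_cancel_of_le hW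
    · exact ⟨0, by simp, by simp, by simp; omega⟩

lemma gao_aux {K : Type*} [AddCommGroup K] [Fintype K] [DecidableEq K] (d κ h : ℕ)
    (hd : ∀ V : Multiset K, d < card V → ∃ W ≤ V, W ≠ 0 ∧ W.sum = 0)
    (hκ : Fintype.card K ≤ κ) (n : ℕ) :
    ∀ T : Multiset K, card T = n → (0 : K) ∉ T → (∀ x, T.count x ≤ h) →
    ∃ W ≤ T, W.sum = 0 ∧ card W ≤ κ ∧ (κ ≤ card W + h ∨ card T ≤ card W + d) := by
  induction n using Nat.strong_induction_on with
  | _ n ih =>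
    intro T hT h0 hc
    by_cases hlt : card T < Fintype.card K
    · obtain ⟨W, hW, hs, hWc⟩ := max_zs d hd _ T rfl
      have hle := card_le_card hW
      exact ⟨W, hW, hs, by omega, Or.inr hWc⟩
    · obtain ⟨W, hW, hWc, hWs, hW0⟩ := short_zs h T h0 hc (by omega)
      have hp : 0 < card W := card_pos.mpr hW0
      have hcs := card_sub hW
      have hle := card_le_card hW
      obtain ⟨W', hW', hs, hc1, hc2⟩ := ih (card (T - W)) (by omega) (T - W) rfl
        (fun hm => h0 (mem_of_le tsub_le_self hm))
        (fun x => (count_le_of_le x tsub_le_self).trans (hc x))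
      by_cases hbig : κ ≤ card W' + h
      · exact ⟨W', hW'.trans tsub_le_self, hs, hc1, Or.inl hbig⟩
      · refine ⟨W' + W, ?_, by simp [hs, hWs], by simp; omega, Or.inr (by simp; omega)⟩
        calc W' + W ≤ (T - W) + W := by gcongr
          _ = T := tsub_add_cancel_of_le hW

lemma exists_le_map {α β : Type*} (f : α → β) (T : Multiset α) : ∀ B : Multiset β, B ≤ T.map f →
    ∃ A ≤ T, A.map f = B := by
  classical
  induction T using Multiset.induction with
  | empty => intro B hB; exact ⟨0, by simp, by simpa [eq_comm] using hB⟩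
  | cons a T ih =>
    intro B hB
    rw [map_cons] at hB
    by_cases hm : f a ∈ B
    · obtain ⟨B', rfl⟩ := exists_cons_of_mem hm
      obtain ⟨A, hA, rfl⟩ := ih B' ((cons_le_cons_iff _).mp hB)
      exact ⟨a ::ₘ A, by simpa using hA, by simp⟩
    · obtain ⟨A, hA, rfl⟩ := ih B ((le_cons_of_notMem hm).mp hB)
      exact ⟨A, hA.trans (le_cons_self _ _), rfl⟩

/-- Gao's theorem. -/
lemma gao {K : Type*} [AddCommGroup K] [Fintype K] (d κ : ℕ)
    (hd : ∀ V : Multiset K, d < card V → ∃ W ≤ V, W ≠ 0 ∧ W.sum = 0)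
    (hκ : Fintype.card K ≤ κ) (hexp : ∀ x : K, κ • x = 0) (T : Multiset K)
    (hT : κ + d ≤ card T) : ∃ B ≤ T, card B = κ ∧ B.sum = 0 := by
  classical
  obtain ⟨g, -, hg⟩ := Finset.exists_max_image (Finset.univ : Finset K) (fun x => T.count x) ⟨0, by simp⟩
  set h := T.count g with hh
  set T1 := T.map (fun x => x - g) with hT1
  have hinj : Function.Injective (fun x : K => x - g) := sub_left_injective
  have hcnt : ∀ x, T1.count x ≤ h := by
    intro x
    have := count_map_eq_count' (fun x : K => x - g) T hinj (x + g)
    rw [add_sub_cancel_right] at this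
    rw [hT1, this]
    exact hg _ (by simp)
  have h0 : T1.count 0 = h := by
    have := count_map_eq_count' (fun x : K => x - g) T hinj g
    rwa [sub_self] at this
  have hsp : T1.filter (fun x => x ≠ 0) + replicate h 0 = T1 := by
    conv_rhs => rw [← filter_add_not (fun x => x ≠ 0) T1]
    congr 1
    rw [← h0, ← filter_eq']
    simp
  obtain ⟨W, hW, hs, hc1, hc2⟩ := gao_aux d κ h hd hκ _ (T1.filter (fun x => x ≠ 0)) rfl (by simp)
    (fun x => (count_le_of_le x (filter_le _ _)).trans (hcnt x))
  have hcard : card (T1.filter (fun x => x ≠ 0)) + h = card T := by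
    have := congrArg card hsp
    simpa [hT1] using this
  have hB1 : W + replicate (κ - card W) 0 ≤ T1 := by
    rw [← hsp]
    gcongr
    omega
  obtain ⟨B, hB, hBeq⟩ := exists_le_map _ _ _ hB1
  have hBc : card B = κ := by
    have := congrArg card hBeq
    simp at this
    omega
  refine ⟨B, hB, hBc, ?_⟩
  have := congrArg Multiset.sum hBeq
  rw [sum_map_sub] at this
  simpa [hs, hBc, hexp] using this

end EGZaux

namespace EGZaux
open Multiset

lemma exists_sub_card {α : Type*} (T : Multiset α) (k : ℕ) (hk : k ≤ card T) :
    ∃ P ≤ T, card P = k := by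
  induction T using Quotient.inductionOn with
  | _ l =>
    refine ⟨(l.take k : List α), ?_, ?_⟩
    · exact Multiset.coe_le.mpr (List.take_sublist _ _).subperm
    · simpa using hk

lemma exists_irred {M : Type*} [AddCommMonoid M] (D : ℕ)
    (hD : ∀ T : Multiset M, D ≤ card T → ∃ B < T, B.sum = T.sum) (n : ℕ) :
    ∀ T : Multiset M, card T = n → ∃ B ≤ T, B.sum = T.sum ∧ card B < D := by
  induction n using Nat.strong_induction_on with
  | _ n ih =>
    intro T hT
    by_cases h : D ≤ card T
    · obtain ⟨B, hB, hs⟩ := hD T h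
      obtain ⟨C, hC, hs', hc⟩ := ih (card B) (hT ▸ card_lt_card hB) B rfl
      exact ⟨C, hC.trans hB.le, hs'.trans hs, hc⟩
    · exact ⟨T, le_rfl, rfl, by omega⟩

lemma units_of_absorb {M : Type*} [AddCommMonoid M] (z : M) (hz : ∀ a, z + a = z)
    (hnil : ∀ x : M, IsAddUnit x ∨ ∃ n : ℕ, n • x = z) (a : M) (ha : a ≠ z) (R : Multiset M)
    (hR : a + R.sum = a) : ∀ x ∈ R, IsAddUnit x := by
  intro x hx
  rcases hnil x with h | ⟨n, hn⟩
  · exact h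
  · exfalso
    obtain ⟨R', rfl⟩ := exists_cons_of_mem hx
    rw [sum_cons] at hR
    have key : ∀ m : ℕ, a + m • (x + R'.sum) = a := by
      intro m
      induction m with
      | zero => simp
      | succ m ih => rw [succ_nsmul, ← add_assoc, ih, hR]
    apply ha
    rw [← key n, nsmul_add, hn, hz, add_comm, hz]

lemma sum_map_val {M : Type*} [AddCommMonoid M] (U : Multiset (AddUnits M)) :
    (U.map AddUnits.val).sum = (U.sum : AddUnits M) :=
  (map_multiset_sum (AddUnits.coeHom M) U).symm

/-- stabilizer of `a` in the unit group -/
def stab {M : Type*} [AddCommMonoid M] (a : M) : AddSubgroup (AddUnits M) where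
  carrier := {u | a + (u : M) = a}
  zero_mem' := by simp
  add_mem' := by
    intro u v hu hv
    simp only [Set.mem_ofPred_eq, AddUnits.val_add] at *
    rw [← add_assoc, hu, hv]
  neg_mem' := by
    intro u hu
    simp only [Set.mem_ofPred_eq] at *
    conv_lhs => rw [← hu]
    simp [add_assoc]

lemma mem_stab {M : Type*} [AddCommMonoid M] (a : M) (u : AddUnits M) :
    u ∈ stab a ↔ a + (u : M) = a := Iff.rfl

lemma sum_map_mk {M : Type*} [AddCommMonoid M] (a : M) (U : Multiset (AddUnits M)) :
    (U.map (QuotientAddGroup.mk : AddUnits M → AddUnits M ⧸ stab a)).sum = ((U.sum : AddUnits M) : AddUnits M ⧸ stab a) :=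
  (map_multiset_sum (QuotientAddGroup.mk' (stab a)) U).symm

lemma main_monoid {M : Type*} [AddCommMonoid M] [Fintype M] (z : M) (hz : ∀ a, z + a = z)
    (hnil : ∀ x : M, IsAddUnit x ∨ ∃ n : ℕ, n • x = z) (D κ : ℕ)
    (hD : ∀ T : Multiset M, D ≤ card T → ∃ B < T, B.sum = T.sum)
    (hκ : Fintype.card M ≤ κ) (hexp : ∀ u : AddUnits M, κ • u = 0)
    (T : Multiset M) (hT : D + κ - 1 ≤ card T) :
    ∃ B ≤ T, card T - card B = κ ∧ B.sum = T.sum := by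
  classical
  have hM : 0 < Fintype.card M := Fintype.card_pos_iff.mpr ⟨0⟩
  by_cases ha : T.sum = z
  · obtain ⟨B, hB, hs, hc⟩ := exists_irred D hD _ T rfl
    have hcs := card_sub hB
    have hle := card_le_card hB
    obtain ⟨P, hP, hPc⟩ := exists_sub_card (T - B) (card T - κ - card B) (by omega)
    refine ⟨B + P, ?_, ?_, ?_⟩
    · calc B + P ≤ B + (T - B) := by gcongr
        _ = T := add_tsub_cancel_of_le hB
    · rw [card_add, hPc]; omega
    · rw [sum_add, hs, ha, hz]
  set a := T.sum with hadef
  set TG := T.filter IsAddUnit with hTG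
  set TN := T.filter (fun x => ¬ IsAddUnit x) with hTN
  have hsplit : TG + TN = T := filter_add_not _ _
  have hlift : ∀ R : Multiset M, (∀ x ∈ R, IsAddUnit x) →
      ∃ U : Multiset (AddUnits M), U.map AddUnits.val = R := by
    intro R hR
    lift R to Multiset (AddUnits M) using hR
    exact ⟨R, rfl⟩
  obtain ⟨U, hU⟩ := hlift TG (fun x hx => (mem_filter.mp hx).2)
  have hasum : a = (U.sum : AddUnits M) + TN.sum := by
    rw [← sum_map_val, hU, ← sum_add, hsplit]
  have claim : ∀ V : Multiset (AddUnits M ⧸ stab a), (∀ W ≤ V, W.sum = 0 → W = 0) →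
      card V + card TN < D := by
    intro V hV
    by_contra! hcon
    obtain ⟨U', rfl⟩ := Multiset.map_surjective_of_surjective
      (QuotientAddGroup.mk_surjective (s := stab a)) V
    obtain ⟨B, hB, hBs⟩ := hD (U'.map AddUnits.val + TN) (by simpa using hcon)
    obtain ⟨R, hR⟩ := Multiset.le_iff_exists_add.mp hB.le
    have hy := congrArg Multiset.sum hR
    rw [sum_add B, hBs, sum_add, sum_map_val] at hy
    have haR : a + R.sum = a := by
      have h2 : a = ((U'.sum : AddUnits M) + TN.sum) + (((U.sum - U'.sum : AddUnits M)) : M) := by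
        rw [hasum, add_right_comm, ← AddUnits.val_add]
        congr 2
        abel
      conv_rhs => rw [h2, hy]
      rw [h2]
      abel
    have hRu := units_of_absorb z hz hnil a ha R haR
    have hRle : R ≤ U'.map AddUnits.val := by
      have h3 : R ≤ (U'.map AddUnits.val + TN).filter IsAddUnit :=
        le_filter.mpr ⟨hR ▸ le_add_left R B, hRu⟩
      have h4 : TN.filter IsAddUnit = 0 := by
        rw [filter_eq_nil]; intro x hx; exact (mem_filter.mp hx).2
      rw [filter_add, h4, add_zero] at h3
      exact h3.trans (filter_le _ _)
    obtain ⟨R', hR', rfl⟩ := exists_le_map _ _ _ hRle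
    rw [sum_map_val] at haR
    have h5 := hV (R'.map _) (map_le_map hR') (by
      rw [sum_map_mk, QuotientAddGroup.eq_zero_iff, mem_stab]; exact haR)
    rw [map_eq_zero] at h5
    subst h5
    simp at hR
    exact hB.ne hR.symm
  have hTNc : card TN < D := by simpa using claim 0 (by simp)
  have : Finite (AddUnits M) := Finite.of_injective AddUnits.val AddUnits.val_injective
  let : Fintype (AddUnits M) := Fintype.ofFinite _
  let : Fintype (AddUnits M ⧸ stab a) := Fintype.ofFinite _
  have hK : Fintype.card (AddUnits M ⧸ stab a) ≤ κ :=
    ((Fintype.card_le_of_surjective _ (QuotientAddGroup.mk_surjective (s := stab a))).trans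
      (Fintype.card_le_of_injective (fun u : AddUnits M => (u : M)) AddUnits.val_injective)).trans hκ
  have hcT := congrArg card hsplit
  have hcU := congrArg card hU
  rw [card_map] at hcU
  rw [card_add] at hcT
  obtain ⟨B', hB', hB'c, hB's⟩ := gao (K := AddUnits M ⧸ stab a) (D - 1 - card TN) κ (by
      intro V hV
      by_contra! hcon
      have := claim V (fun W hW hs => by_contra fun h0 => hcon W hW h0 hs)
      omega) hK (by
      intro x
      obtain ⟨u, rfl⟩ := QuotientAddGroup.mk_surjective x
      rw [← QuotientAddGroup.mk_nsmul, hexp, QuotientAddGroup.mk_zero])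
    (U.map (QuotientAddGroup.mk : AddUnits M → AddUnits M ⧸ stab a)) (by rw [card_map]; omega)
  obtain ⟨A, hA, rfl⟩ := exists_le_map _ _ _ hB'
  rw [sum_map_mk, QuotientAddGroup.eq_zero_iff, mem_stab] at hB's
  have hRT : A.map AddUnits.val ≤ T :=
    (map_le_map hA).trans (by rw [hU, ← hsplit]; exact le_add_right _ _)
  refine ⟨T - A.map AddUnits.val, tsub_le_self, ?_, ?_⟩
  · have h1 := card_sub hRT
    have h2 := card_le_card hRT
    simp only [card_map] at *
    omega
  · have h1 := congrArg Multiset.sum (tsub_add_cancel_of_le hRT)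
    rw [sum_add, sum_map_val, ← hadef] at h1
    exact (AddUnits.add_left_inj _).mp (h1.trans hB's.symm)

lemma mSum_eq {M : Type} [AddCommMonoid M] (T : Multiset M) :
    (T = 0 ∧ EGZ.mSum T = 0) ∨ (T ≠ 0 ∧ EGZ.mSum T = ((T.sum : M) : WithZero M)) := by
  induction T using Multiset.induction with
  | empty => left; simp [EGZ.mSum]
  | cons a T ih =>
    right
    refine ⟨by simp, ?_⟩
    have h : EGZ.mSum (a ::ₘ T) = (a : WithZero M) + EGZ.mSum T := by simp [EGZ.mSum]
    rw [h]
    rcases ih with ⟨rfl, h⟩ | ⟨_, h⟩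
    · simp [h]
    · rw [h, sum_cons, WithZero.coe_add]

lemma eqSum_iff {M : Type} [AddCommMonoid M] (A B : Multiset M) :
    EGZ.EqSum A B ↔ A.sum = B.sum := by
  have he : ∀ e : M, (∀ a : M, e + a = a) → e = 0 := fun e h => by simpa using h 0
  unfold EGZ.EqSum
  constructor
  · rintro (h | ⟨e, h1, h⟩)
    · rcases mSum_eq A with ⟨rfl, hA⟩ | ⟨hA0, hA⟩ <;> rcases mSum_eq B with ⟨rfl, hB⟩ | ⟨hB0, hB⟩ <;>
        simp only [hA, hB] at h
      · rfl
      · exact (WithZero.coe_ne_zero h.symm).elim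
      · exact (WithZero.coe_ne_zero h).elim
      · exact WithZero.coe_inj.mp h
    · have := he e h1
      subst this
      rcases mSum_eq A with ⟨rfl, hA⟩ | ⟨hA0, hA⟩ <;> rcases mSum_eq B with ⟨rfl, hB⟩ | ⟨hB0, hB⟩ <;>
        simp only [hA, hB] at h <;> simp [WithZero.coe_ne_zero, WithZero.coe_inj] at h ⊢ <;> simp [h]
  · intro h
    rcases mSum_eq A with ⟨rfl, hA⟩ | ⟨hA0, hA⟩ <;> rcases mSum_eq B with ⟨rfl, hB⟩ | ⟨hB0, hB⟩
    · left; rfl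
    · right; exact ⟨0, by simp, Or.inl ⟨hA, by rw [hB, ← h, sum_zero]⟩⟩
    · right; exact ⟨0, by simp, Or.inr ⟨by rw [hA, h, sum_zero], hB⟩⟩
    · left; rw [hA, hB, h]

lemma rep_eq {M : Type} [AddCommMonoid M] (a : M) (n : ℕ) : EGZ.rep a n = (n + 1) • a := by
  induction n with
  | zero => simp [EGZ.rep]
  | succ n ih => rw [EGZ.rep, ih, succ_nsmul _ (n + 1)]

lemma period_spec {M : Type} [AddCommMonoid M] [Fintype M] (a : M) :
    0 < EGZ.period a ∧ ∃ k, EGZ.rep a (k + EGZ.period a) = EGZ.rep a k := by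
  have hne : {t : ℕ | 0 < t ∧ ∃ k : ℕ, EGZ.rep a (k + t) = EGZ.rep a k}.Nonempty := by
    obtain ⟨x, y, hxy, h⟩ := Finite.exists_ne_map_eq_of_infinite (EGZ.rep a)
    rcases lt_or_gt_of_ne hxy with hlt | hlt
    · exact ⟨y - x, by omega, x, by rw [Nat.add_sub_cancel' hlt.le, h]⟩
    · exact ⟨x - y, by omega, y, by rw [Nat.add_sub_cancel' hlt.le, h]⟩
  exact Nat.sInf_mem hne

lemma expS_pos {M : Type} [AddCommMonoid M] [Fintype M] : 0 < EGZ.expS M := by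
  rw [Nat.pos_iff_ne_zero, EGZ.expS, Ne, Finset.lcm_eq_zero_iff]
  rintro ⟨a, -, h⟩
  exact (period_spec a).1.ne' h

lemma kappa_ge {M : Type} [AddCommMonoid M] [Fintype M] : Fintype.card M ≤ EGZ.kappa M := by
  have h := expS_pos (M := M)
  unfold EGZ.kappa
  have h1 := Nat.div_add_mod (Fintype.card M + EGZ.expS M - 1) (EGZ.expS M)
  have h2 := Nat.mod_lt (Fintype.card M + EGZ.expS M - 1) h
  rw [mul_comm] at h1
  omega

lemma kappa_smul {M : Type} [AddCommMonoid M] [Fintype M] (u : AddUnits M) :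
    EGZ.kappa M • u = 0 := by
  have hdvd : EGZ.period (u : M) ∣ EGZ.kappa M :=
    (Finset.dvd_lcm (Finset.mem_univ (u : M))).trans (Dvd.intro_left _ rfl)
  obtain ⟨k, hk⟩ := (period_spec (u : M)).2
  have h0 : EGZ.period (u : M) • u = 0 := by
    rw [rep_eq, rep_eq, ← AddUnits.val_nsmul_eq_nsmul_val, ← AddUnits.val_nsmul_eq_nsmul_val, AddUnits.val_inj,
      add_right_comm, add_nsmul] at hk
    simpa using hk
  obtain ⟨c, hc⟩ := hdvd
  rw [hc, mul_nsmul, h0, nsmul_zero]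

lemma dav_bdd {M : Type*} [AddCommMonoid M] [Fintype M] (T : Multiset M)
    (hT : Fintype.card M ≤ card T) : ∃ B < T, B.sum = T.sum := by
  induction T using Quotient.inductionOn with
  | _ l =>
    have hl : Fintype.card M ≤ l.length := hT
    obtain ⟨i, j, hij, h⟩ := Fintype.exists_ne_map_eq_of_card_lt
      (fun i : Fin (l.length + 1) => (l.take i).sum) (by simp; omega)
    wlog hlt : i < j generalizing i j
    · exact this j i hij.symm h.symm (lt_of_le_of_ne (not_lt.mp hlt) hij.symm)
    have hlt' : (i : ℕ) < j := hlt
    have hj : (j : ℕ) ≤ l.length := by omega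
    refine ⟨((l.take i ++ l.drop j : List M) : Multiset M), lt_of_le_of_ne ?_ ?_, ?_⟩
    · apply Multiset.coe_le.mpr
      apply List.Sublist.subperm
      have h1 := (List.take_sublist_take_left (l := l) hlt'.le).append (List.Sublist.refl (l.drop j))
      rwa [List.take_append_drop] at h1
    · intro heq
      have := congrArg card heq
      simp at this
      omega
    · change (((l.take i ++ l.drop j : List M) : Multiset M)).sum = ((l : Multiset M)).sum
      rw [sum_coe, sum_coe, List.sum_append]
      conv_rhs => rw [← List.take_append_drop j l, List.sum_append]
      exact congrArg (· + (l.drop j).sum) h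

lemma main_defs {M : Type} [AddCommMonoid M] [Fintype M] (z : M) (hz : ∀ a, z + a = z)
    (hnil : ∀ x : M, IsAddUnit x ∨ ∃ n : ℕ, EGZ.rep x n = z) :
    EGZ.EC M ≤ EGZ.DavC M + EGZ.kappa M - 1 := by
  have hmem : ∀ T : Multiset M, EGZ.DavC M ≤ card T → EGZ.Reducible T := by
    have hne : {ℓ : ℕ | ∀ T : Multiset M, ℓ ≤ card T → EGZ.Reducible T}.Nonempty :=
      ⟨Fintype.card M, fun T hT => by
        obtain ⟨B, hB, hs⟩ := dav_bdd T hT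
        exact ⟨B, hB, (eqSum_iff _ _).mpr hs⟩⟩
    exact Nat.sInf_mem hne
  have hD : ∀ T : Multiset M, EGZ.DavC M ≤ card T → ∃ B < T, B.sum = T.sum := by
    intro T hT
    obtain ⟨B, hB, hs⟩ := hmem T hT
    exact ⟨B, hB, (eqSum_iff _ _).mp hs⟩
  have main := main_monoid z hz (fun x => (hnil x).imp id fun ⟨n, hn⟩ => ⟨n + 1, by rw [← rep_eq, hn]⟩)
    (EGZ.DavC M) (EGZ.kappa M) hD kappa_ge kappa_smul
  have hM : 0 < Fintype.card M := Fintype.card_pos_iff.mpr ⟨0⟩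
  have hk := kappa_ge (M := M)
  apply Nat.sInf_le
  refine ⟨?_, ?_⟩
  · rcases Nat.eq_zero_or_pos (EGZ.DavC M) with h0 | h0
    · obtain ⟨B, hB, -⟩ := hD 0 (by simp [h0])
      have := card_lt_card hB
      simp at this
    · omega
  · intro T hT
    obtain ⟨B, hB, hc, hs⟩ := main T hT
    exact ⟨B, hB, hc, (eqSum_iff _ _).mpr hs⟩

end EGZaux

/-- For a finite elementary semigroup `S = G ∪ N`,
`E(S) ≤ D(S) + κ(S) − 1`. -/
theorem E_le_of_elementary (S : Type) [AddCommSemigroup S] [Fintype S]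
    (G N : Set S) (hel : IsElementary S G N) :
    EGZ.EC S ≤ EGZ.DavC S + EGZ.kappa S - 1 := by
  obtain ⟨hGN, hdis, hadd, ⟨e, heG, he, hinv⟩, hideal, ⟨z, hzN, hz, hnil⟩⟩ := hel
  let : Zero S := ⟨e⟩
  let : AddCommMonoid S :=
    { (inferInstance : AddCommSemigroup S) with
      zero_add := he
      add_zero := fun a => (add_comm a e).trans (he a)
      nsmul := nsmulRec }
  refine EGZaux.main_defs (M := S) z hz ?_
  intro x
  rcases hGN x with hx | hx
  · left
    obtain ⟨b, -, hb⟩ := hinv x hx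
    exact IsAddUnit.of_add_eq_zero b hb
  · right
    exact hnil x hx
end

section
/- Let S = G ∪ N be a finite elementary semigroup. Then E(S) = D(S) + κ(S) − 1. -/
section GaoPart

open scoped Pointwise in
theorem scherk {Q : Type} [AddCommGroup Q] [DecidableEq Q] (n : ℕ) :
    ∀ A B : Finset Q, B.card ≤ n → (0 : Q) ∈ A → (0 : Q) ∈ B →
    (∀ a ∈ A, ∀ b ∈ B, a + b = 0 → a = 0 ∧ b = 0) →
    A.card + B.card ≤ (A + B).card + 1 := by
  induction n with
  | zero =>
    intro A B hn _ hB _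
    have : 0 < B.card := Finset.card_pos.2 ⟨0, hB⟩
    omega
  | succ n ih =>
    intro A B hn hA hB h
    by_cases hex : ∃ a ∈ A, ∃ b ∈ B, a + b ∉ A
    · obtain ⟨a, ha, b, hb, hab⟩ := hex
      have hsub := Finset.addDysonETransform.subset a (A, B)
      have hcard := Finset.addDysonETransform.card a (A, B)
      have h1 : (Finset.addDysonETransform a (A, B)).1 = A ∪ (a +ᵥ B) := rfl
      have h2 : (Finset.addDysonETransform a (A, B)).2 = B ∩ (-a +ᵥ A) := rfl
      rw [h1, h2] at hsub hcard
      simp only at hsub hcard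
      have m2 : ∀ y, y ∈ B ∩ (-a +ᵥ A) ↔ y ∈ B ∧ a + y ∈ A := by
        intro y
        rw [Finset.mem_inter, Finset.mem_neg_vadd_finset_iff]
        rfl
      have hlt : (B ∩ (-a +ᵥ A)).card < B.card := by
        apply Finset.card_lt_card
        refine ⟨Finset.inter_subset_left, fun hh => hab ?_⟩
        exact ((m2 b).1 (hh hb)).2
      have := ih (A ∪ (a +ᵥ B)) (B ∩ (-a +ᵥ A)) (by omega)
        (Finset.mem_union_left _ hA) ((m2 0).2 ⟨hB, by simpa using ha⟩) (by
          intro a' ha' b' hb' hs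
          obtain ⟨hb1, hb2⟩ := (m2 b').1 hb'
          rcases Finset.mem_union.1 ha' with h' | h'
          · exact h a' h' b' hb1 hs
          · obtain ⟨c, hc, rfl⟩ := Finset.mem_vadd_finset.1 h'
            simp only [vadd_eq_add] at hs ⊢
            have e1 : (a + b') + c = 0 := by rw [← hs]; abel
            obtain ⟨e2, e3⟩ := h _ hb2 _ hc e1
            obtain ⟨e4, e5⟩ := h a ha b' hb1 e2
            exact ⟨by rw [e4, e3, add_zero], e5⟩)
      have := Finset.card_le_card hsub
      omega
    · push Not at hex
      have hB1 : B ⊆ {0} := by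
        intro b hb
        have himg : A.image (fun x => x + b) = A := by
          apply Finset.eq_of_subset_of_card_le
          · intro y hy
            obtain ⟨x, hx, rfl⟩ := Finset.mem_image.1 hy
            exact hex x hx b hb
          · rw [Finset.card_image_of_injective _ (add_left_injective b)]
        rw [← himg] at hA
        obtain ⟨x, hx, hx0⟩ := Finset.mem_image.1 hA
        exact Finset.mem_singleton.2 (h x hx b hb hx0).2
      have h1 := Finset.card_le_card hB1
      have h2 : A ⊆ A + B := fun x hx => Finset.mem_add.2 ⟨x, hx, 0, hB, add_zero x⟩
      have h3 := Finset.card_le_card h2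
      simp at h1
      omega

open scoped Pointwise in
theorem short_zero_sum {Q : Type} [AddCommGroup Q] [Fintype Q] [DecidableEq Q] (U : Multiset Q)
    (h : ℕ) (hU : Fintype.card Q ≤ U.card) (hm : ∀ x, U.count x ≤ h) :
    ∃ W ≤ U, W ≠ 0 ∧ W.card ≤ h ∧ W.sum = 0 := by
  by_contra hno
  push Not at hno
  let A : ℕ → Finset Q := fun j => U.toFinset.filter (fun x => j < U.count x)
  have key : ∀ j ≤ h, ∃ B : Finset Q, (0 : Q) ∈ B ∧
      1 + ∑ i ∈ Finset.range j, (A i).card ≤ B.card ∧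
      ∀ b ∈ B, ∃ W ≤ U, W.card ≤ j ∧ W.sum = b := by
    intro j
    induction j with
    | zero =>
      intro _
      refine ⟨{0}, by simp, by simp, ?_⟩
      intro b hb
      refine ⟨0, by simp, by simp, ?_⟩
      simpa using (Finset.mem_singleton.1 hb).symm
    | succ j ih =>
      intro hj
      obtain ⟨B, hB0, hBc, hB⟩ := ih (by omega)
      have ext : ∀ W ≤ U, W.card ≤ j → ∀ b ∈ A j, b ::ₘ W ≤ U := by
        intro W hW hWc b hb
        rw [Multiset.le_iff_count]
        intro x
        rw [Multiset.count_cons]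
        have h1 := Multiset.le_iff_count.1 hW x
        split_ifs with hx
        · subst hx
          have h2 : j < U.count x := (Finset.mem_filter.1 hb).2
          have h3 := Multiset.count_le_card x W
          omega
        · omega
      have h0 : (0 : Q) ∉ A j := by
        intro h0
        exact hno _ (ext 0 (by simp) (by simp) 0 h0) (by simp) (by simp; omega) (by simp)
      refine ⟨B + insert 0 (A j), ?_, ?_, ?_⟩
      · exact Finset.mem_add.2 ⟨0, hB0, 0, Finset.mem_insert_self _ _, add_zero 0⟩
      · have := scherk _ B (insert 0 (A j)) le_rfl hB0 (Finset.mem_insert_self _ _) (by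
          intro a ha b hb hab
          rcases Finset.mem_insert.1 hb with rfl | hb
          · exact ⟨by simpa using hab, rfl⟩
          · obtain ⟨W, hW, hWc, rfl⟩ := hB a ha
            exact absurd (by rw [Multiset.sum_cons, add_comm, hab])
              (hno _ (ext W hW hWc b hb) (by simp) (by simp; omega)))
        rw [Finset.card_insert_of_notMem h0] at this
        rw [Finset.sum_range_succ]
        omega
      · intro c hc
        obtain ⟨a, ha, b, hb, rfl⟩ := Finset.mem_add.1 hc
        obtain ⟨W, hW, hWc, rfl⟩ := hB a ha
        rcases Finset.mem_insert.1 hb with rfl | hb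
        · exact ⟨W, hW, by omega, by simp⟩
        · exact ⟨b ::ₘ W, ext W hW hWc b hb, by simp; omega, by simp [add_comm]⟩
  obtain ⟨B, _, hB, _⟩ := key h le_rfl
  have hsum : ∑ i ∈ Finset.range h, (A i).card = U.card := by
    simp only [A, Finset.card_filter]
    rw [Finset.sum_comm, ← Multiset.toFinset_sum_count_eq]
    refine Finset.sum_congr rfl fun x _ => ?_
    rw [← Finset.card_filter]
    have : Finset.filter (fun i => i < U.count x) (Finset.range h) = Finset.range (U.count x) := by
      ext i
      have := hm x
      simp only [Finset.mem_filter, Finset.mem_range]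
      omega
    rw [this, Finset.card_range]
  have := Finset.card_le_univ B
  omega

/-- Remove short zero-sum pieces until the length is at most `m`. -/
theorem shrink {Q : Type} [AddCommGroup Q] [Fintype Q] [DecidableEq Q] (h m : ℕ)
    (hm : Fintype.card Q ≤ m) (n : ℕ) : ∀ U : Multiset Q, U.card ≤ n →
    (∀ x, U.count x ≤ h) → m ≤ U.card + h → U.sum = 0 →
    ∃ W ≤ U, W.card ≤ m ∧ m ≤ W.card + h ∧ W.sum = 0 := by
  induction n with
  | zero =>
    intro U hn _ hU hs
    exact ⟨U, le_rfl, by omega, hU, hs⟩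
  | succ n ih =>
    intro U hn hc hU hs
    by_cases hle : U.card ≤ m
    · exact ⟨U, le_rfl, hle, hU, hs⟩
    · obtain ⟨V, hV, hV0, hVc, hVs⟩ := short_zero_sum U h (by omega) hc
      obtain ⟨R, rfl⟩ := Multiset.le_iff_exists_add.1 hV
      have hp := Multiset.card_pos.2 hV0
      rw [Multiset.card_add] at *
      obtain ⟨W, hW, h1⟩ := ih R (by omega)
        (fun x => (Multiset.count_le_of_le x (Multiset.le_add_left R V)).trans (hc x)) (by omega)
        (by simpa [hVs] using hs)
      exact ⟨W, hW.trans (Multiset.le_add_left R V), h1⟩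

/-- A large zero-sum subsequence. -/
theorem large_zero_sum {Q : Type} [AddCommGroup Q] (k : ℕ)
    (hk : ∀ V : Multiset Q, k ≤ V.card → ∃ W ≤ V, W ≠ 0 ∧ W.sum = 0) (n : ℕ) :
    ∀ U : Multiset Q, U.card ≤ n → ∃ W ≤ U, W.sum = 0 ∧ U.card + 1 ≤ W.card + k := by
  have hk0 : 0 < k := by
    by_contra h0
    obtain ⟨W, hW, hW0, _⟩ := hk 0 (by simp; omega)
    exact hW0 (by simpa using hW)
  induction n with
  | zero =>
    intro U hU
    exact ⟨0, by simp, by simp, by simp; omega⟩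
  | succ n ih =>
    intro U hU
    by_cases h : U.card < k
    · exact ⟨0, by simp, by simp, by simp; omega⟩
    · obtain ⟨V, hV, hV0, hVs⟩ := hk U (by omega)
      obtain ⟨R, rfl⟩ := Multiset.le_iff_exists_add.1 hV
      have hp := Multiset.card_pos.2 hV0
      rw [Multiset.card_add] at *
      obtain ⟨W, hW, h1, h2⟩ := ih R (by omega)
      refine ⟨V + W, add_le_add le_rfl hW, by simp [hVs, h1], ?_⟩
      rw [Multiset.card_add]
      omega

theorem exists_map_of_le_map {α β : Type} (f : α → β) (s : Multiset α) :
    ∀ t : Multiset β, t ≤ s.map f → ∃ s' ≤ s, s'.map f = t := by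
  classical
  intro t
  induction t using Multiset.induction generalizing s with
  | empty => intro _; exact ⟨0, by simp, by simp⟩
  | cons b t ih =>
    intro h
    have hb : b ∈ s.map f := Multiset.mem_of_le h (Multiset.mem_cons_self _ _)
    obtain ⟨a, ha, rfl⟩ := Multiset.mem_map.1 hb
    obtain ⟨r, rfl⟩ := Multiset.exists_cons_of_mem ha
    rw [Multiset.map_cons, Multiset.cons_le_cons_iff] at h
    obtain ⟨s', hs', rfl⟩ := ih r h
    exact ⟨a ::ₘ s', (Multiset.cons_le_cons_iff a).2 hs', by simp⟩

/-- Gao's theorem. -/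
theorem gao {Q : Type} [AddCommGroup Q] [Fintype Q] [DecidableEq Q] (k m : ℕ)
    (hk : ∀ V : Multiset Q, k ≤ V.card → ∃ W ≤ V, W ≠ 0 ∧ W.sum = 0)
    (hm : Fintype.card Q ≤ m) (hexp : ∀ q : Q, m • q = 0) (T : Multiset Q)
    (hT : k + m ≤ T.card + 1) : ∃ W ≤ T, W.card = m ∧ W.sum = 0 := by
  -- the case where `0` has maximal multiplicity
  have core : ∀ T : Multiset Q, k + m ≤ T.card + 1 → (∀ x, T.count x ≤ T.count 0) →
      ∃ W ≤ T, W.card = m ∧ W.sum = 0 := by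
    intro T hT hmax
    set h := T.count 0 with hh
    have hsplit : T = Multiset.replicate h 0 + T.filter (fun x => ¬ (0 = x)) := by
      rw [hh, ← Multiset.filter_eq, Multiset.filter_add_not]
    set R := T.filter (fun x => ¬ (0 = x)) with hR
    have hcard : T.card = h + R.card := by
      conv_lhs => rw [hsplit]
      simp
    by_cases hhm : m ≤ h
    · refine ⟨Multiset.replicate m 0, ?_, by simp, by simp⟩
      exact (Multiset.replicate_le_replicate 0).2 hhm |>.trans (Multiset.le_count_iff_replicate_le.1 le_rfl)
    · obtain ⟨U, hU, hUs, hUc⟩ := large_zero_sum k hk _ R le_rfl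
      have hRT : R ≤ T := Multiset.filter_le _ _
      obtain ⟨W, hW, hWm, hWm', hWs⟩ := shrink h m hm _ U le_rfl
        (fun x => (Multiset.count_le_of_le x (hU.trans hRT)).trans (hmax x)) (by omega) hUs
      refine ⟨Multiset.replicate (m - W.card) 0 + W, ?_, ?_, by simp [hWs]⟩
      · rw [hsplit]
        exact add_le_add ((Multiset.replicate_le_replicate 0).2 (by omega)) (hW.trans hU)
      · simp; omega
  have : ∃ g : Q, ∀ x, T.count x ≤ T.count g := by
    obtain ⟨g, _, hg⟩ := Finset.exists_max_image (Finset.univ : Finset Q) (fun x => T.count x)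
      ⟨0, Finset.mem_univ _⟩
    exact ⟨g, fun x => hg x (Finset.mem_univ _)⟩
  obtain ⟨g, hg⟩ := this
  have hinj : Function.Injective (fun x : Q => x - g) := sub_left_injective
  have hcount : ∀ x, (T.map (fun x => x - g)).count x = T.count (x + g) := by
    intro x
    have := Multiset.count_map_eq_count' (fun x : Q => x - g) T hinj (x + g)
    simpa using this
  obtain ⟨W', hW', hc, hs⟩ := core (T.map (fun x => x - g)) (by simpa using hT) (by
    intro x
    rw [hcount, hcount, zero_add]
    exact hg _)
  obtain ⟨W, hW, rfl⟩ := exists_map_of_le_map _ _ _ hW'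
  rw [Multiset.card_map] at hc
  refine ⟨W, hW, hc, ?_⟩
  rw [Multiset.sum_map_sub] at hs
  simpa [hc, hexp] using hs

end GaoPart

section MonoidPart

variable {M : Type} [AddCommMonoid M]

theorem EGZ.mSum_eq (T : Multiset M) (hT : T ≠ 0) : EGZ.mSum T = ((T.sum : M) : WithZero M) := by
  have hm : ∀ T : Multiset M,
      EGZ.mSum T = (T.map (fun s : M => (s : WithZero M))).sum := by
    intro T
    simp [EGZ.mSum, Multiset.bind_def, Multiset.pure_def, Multiset.bind_singleton]
  rw [hm]
  induction T using Multiset.induction with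
  | empty => exact absurd rfl hT
  | cons a T ih =>
    by_cases h : T = 0
    · subst h; simp
    · rw [Multiset.map_cons, Multiset.sum_cons, ih h, Multiset.sum_cons, WithZero.coe_add]

theorem EGZ.eqSum_iff_s11 (A B : Multiset M) : EGZ.EqSum A B ↔ A.sum = B.sum := by
  have hid : ∀ e : M, (∀ a : M, e + a = a) → e = 0 := fun e he => by simpa using he 0
  have h0 : EGZ.mSum (0 : Multiset M) = 0 := rfl
  unfold EGZ.EqSum
  by_cases hA : A = 0 <;> by_cases hB : B = 0
  · subst hA hB; simp
  · subst hA
    rw [h0, EGZ.mSum_eq B hB]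
    constructor
    · rintro (h | ⟨e, he, ⟨_, h⟩ | ⟨h, _⟩⟩)
      · exact absurd h.symm WithZero.coe_ne_zero
      · rw [WithZero.coe_inj.1 h, hid e he]; rfl
      · exact absurd h.symm WithZero.coe_ne_zero
    · intro h
      exact Or.inr ⟨0, zero_add, Or.inl ⟨rfl, by rw [← h]; rfl⟩⟩
  · subst hB
    rw [h0, EGZ.mSum_eq A hA]
    constructor
    · rintro (h | ⟨e, he, ⟨h, _⟩ | ⟨h, _⟩⟩)
      · exact absurd h WithZero.coe_ne_zero
      · exact absurd h WithZero.coe_ne_zero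
      · rw [WithZero.coe_inj.1 h, hid e he]; rfl
    · intro h
      exact Or.inr ⟨0, zero_add, Or.inr ⟨by rw [h]; rfl, rfl⟩⟩
  · rw [EGZ.mSum_eq A hA, EGZ.mSum_eq B hB]
    constructor
    · rintro (h | ⟨e, he, ⟨h, _⟩ | ⟨_, h⟩⟩)
      · exact WithZero.coe_inj.1 h
      · exact absurd h WithZero.coe_ne_zero
      · exact absurd h WithZero.coe_ne_zero
    · intro h
      exact Or.inl (by rw [h])

theorem EGZ.rep_eq_s11 (a : M) (n : ℕ) : EGZ.rep a n = (n + 1) • a := by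
  induction n with
  | zero => simp [EGZ.rep]
  | succ n ih => rw [EGZ.rep, ih, succ_nsmul a (n + 1)]

theorem EGZ.reducible_iff (T : Multiset M) :
    EGZ.Reducible T ↔ ∃ B C : Multiset M, T = B + C ∧ C ≠ 0 ∧ B.sum = T.sum := by
  constructor
  · rintro ⟨B, hB, h⟩
    obtain ⟨C, rfl⟩ := Multiset.le_iff_exists_add.1 hB.le
    refine ⟨B, C, rfl, ?_, (EGZ.eqSum_iff_s11 _ _).1 h⟩
    rintro rfl
    simp at hB
  · rintro ⟨B, C, rfl, hC, h⟩
    refine ⟨B, ?_, (EGZ.eqSum_iff_s11 _ _).2 h⟩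
    exact lt_of_le_of_ne (Multiset.le_add_right _ _) (by simpa using hC)

theorem EGZ.reducible_of_card [Fintype M] (T : Multiset M) (hT : Fintype.card M ≤ T.card) :
    EGZ.Reducible T := by
  rw [EGZ.reducible_iff]
  obtain ⟨L, rfl⟩ := Quot.exists_rep T
  change Fintype.card M ≤ L.length at hT
  have hlt : Fintype.card M < Fintype.card (Fin (L.length + 1)) := by
    simpa using Nat.lt_succ_of_le hT
  obtain ⟨i, j, hij, heq⟩ := Fintype.exists_ne_map_eq_of_card_lt
    (fun i : Fin (L.length + 1) => (L.take i).sum) hlt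
  have main : ∀ i j : ℕ, i < j → j ≤ L.length → (L.take i).sum = (L.take j).sum →
      ∃ B C : Multiset M, (L : Multiset M) = B + C ∧ C ≠ 0 ∧ B.sum = (L : Multiset M).sum := by
    intro i j hij hj h
    have e1 : (L : Multiset M) = ((L.take j : List M) : Multiset M) + (L.drop j : List M) := by
      rw [Multiset.coe_add, List.take_append_drop]
    have e2 : ((L.take j : List M) : Multiset M) =
        ((L.take i : List M) : Multiset M) + ((L.take j).drop i : List M) := by
      rw [Multiset.coe_add]
      congr 1
      conv_lhs => rw [← List.take_append_drop i (L.take j)]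
      rw [List.take_take, min_eq_left hij.le]
    refine ⟨(L.take i : List M) + (L.drop j : List M), ((L.take j).drop i : List M), ?_, ?_, ?_⟩
    · rw [e1, e2]; abel
    · intro h0
      have := congrArg Multiset.card h0
      simp at this
      omega
    · rw [e1, Multiset.sum_add, Multiset.sum_add, Multiset.sum_coe, Multiset.sum_coe,
        Multiset.sum_coe, h]
  have hne : (i : ℕ) ≠ j := fun h => hij (Fin.ext h)
  rcases lt_or_gt_of_ne hne with h | h
  · exact main i j h (by omega) heq
  · exact main j i h (by omega) heq.symm

theorem EGZ.davC_spec [Fintype M] (T : Multiset M) (hT : EGZ.DavC M ≤ T.card) :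
    EGZ.Reducible T := by
  have : EGZ.DavC M ∈ {ℓ : ℕ | ∀ T : Multiset M, ℓ ≤ Multiset.card T → EGZ.Reducible T} :=
    Nat.sInf_mem ⟨Fintype.card M, fun T hT => EGZ.reducible_of_card T hT⟩
  exact this T hT

theorem EGZ.davC_pos [Fintype M] : 0 < EGZ.DavC M := by
  by_contra h
  obtain ⟨B, C, h1, h2, _⟩ := (EGZ.reducible_iff _).1 (EGZ.davC_spec (0 : Multiset M) (by simp; omega))
  have := congrArg Multiset.card h1
  have := Multiset.card_pos.2 h2
  simp at *
  omega

theorem EGZ.exists_irreducible [Fintype M] :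
    ∃ T : Multiset M, EGZ.DavC M ≤ T.card + 1 ∧ ¬ EGZ.Reducible T := by
  by_contra hno
  push Not at hno
  have h0 := EGZ.davC_pos (M := M)
  have : EGZ.DavC M ≤ EGZ.DavC M - 1 := Nat.sInf_le fun T hT => hno T (by omega)
  omega

/-- Every sequence has an equal-sum subsequence shorter than `D`. -/
theorem EGZ.reduce [Fintype M] (n : ℕ) : ∀ T : Multiset M, T.card ≤ n →
    ∃ B ≤ T, B.card < EGZ.DavC M ∧ B.sum = T.sum := by
  induction n with
  | zero =>
    intro T hT
    exact ⟨T, le_rfl, by have := EGZ.davC_pos (M := M); omega, rfl⟩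
  | succ n ih =>
    intro T hT
    by_cases h : T.card < EGZ.DavC M
    · exact ⟨T, le_rfl, h, rfl⟩
    · obtain ⟨B, C, rfl, hC, hs⟩ := (EGZ.reducible_iff _).1 (EGZ.davC_spec T (by omega))
      have := Multiset.card_pos.2 hC
      rw [Multiset.card_add] at hT
      obtain ⟨B', hB', h1, h2⟩ := ih B (by omega)
      exact ⟨B', hB'.trans (Multiset.le_add_right _ _), h1, h2.trans hs⟩

theorem EGZ.period_mem [Fintype M] (a : M) :
    0 < EGZ.period a ∧ ∃ k : ℕ, EGZ.rep a (k + EGZ.period a) = EGZ.rep a k := by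
  have : EGZ.period a ∈ {t : ℕ | 0 < t ∧ ∃ k : ℕ, EGZ.rep a (k + t) = EGZ.rep a k} := by
    apply Nat.sInf_mem
    obtain ⟨i, j, hij, heq⟩ := Finite.exists_ne_map_eq_of_infinite (fun n : ℕ => EGZ.rep a n)
    rcases lt_or_gt_of_ne hij with h | h
    · exact ⟨j - i, by omega, i, by rw [show i + (j - i) = j by omega]; exact heq.symm⟩
    · exact ⟨i - j, by omega, j, by rw [show j + (i - j) = i by omega]; exact heq⟩
  exact this

theorem EGZ.expS_pos_s11 [Fintype M] : 0 < EGZ.expS M := by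
  rw [Nat.pos_iff_ne_zero]
  unfold EGZ.expS
  rw [Ne, Finset.lcm_eq_zero_iff]
  rintro ⟨x, _, hx⟩
  have := (EGZ.period_mem x).1
  omega

theorem EGZ.card_le_kappa [Fintype M] : Fintype.card M ≤ EGZ.kappa M := by
  have h := EGZ.expS_pos_s11 (M := M)
  unfold EGZ.kappa
  have h1 := Nat.div_add_mod (Fintype.card M + EGZ.expS M - 1) (EGZ.expS M)
  have h2 := Nat.mod_lt (Fintype.card M + EGZ.expS M - 1) h
  rw [mul_comm] at h1
  omega

theorem EGZ.kappa_smul [Fintype M] (u : AddUnits M) : EGZ.kappa M • u = 0 := by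
  have hd : EGZ.period (u : M) ∣ EGZ.kappa M := by
    refine Dvd.dvd.trans ?_ (Dvd.intro_left _ rfl : EGZ.expS M ∣ EGZ.kappa M)
    exact Finset.dvd_lcm (Finset.mem_univ (u : M))
  obtain ⟨c, hc⟩ := hd
  obtain ⟨_, k, hk⟩ := EGZ.period_mem (u : M)
  rw [EGZ.rep_eq_s11, EGZ.rep_eq_s11, ← AddUnits.val_nsmul_eq_nsmul_val,
    ← AddUnits.val_nsmul_eq_nsmul_val] at hk
  have hk := AddUnits.ext hk
  have : EGZ.period (u : M) • u = 0 := by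
    have e : k + EGZ.period (u : M) + 1 = EGZ.period (u : M) + (k + 1) := by omega
    rw [e, add_nsmul] at hk
    simpa using hk
  rw [hc, mul_comm, mul_nsmul', this, nsmul_zero]

theorem EGZ.coe_sum_units (W : Multiset (AddUnits M)) :
    (W.map (fun u : AddUnits M => (u : M))).sum = ((W.sum : AddUnits M) : M) := by
  induction W using Multiset.induction with
  | empty => simp
  | cons a W ih => simp [ih]

theorem EGZ.lift_units (C : Multiset M) (hC : ∀ c ∈ C, IsAddUnit c) :
    ∃ V : Multiset (AddUnits M), V.map (fun u : AddUnits M => (u : M)) = C := by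
  induction C using Multiset.induction with
  | empty => exact ⟨0, rfl⟩
  | cons a C ih =>
    obtain ⟨V, hV⟩ := ih fun c hc => hC c (Multiset.mem_cons_of_mem hc)
    obtain ⟨u, hu⟩ := hC a (Multiset.mem_cons_self _ _)
    exact ⟨u ::ₘ V, by simp [hV, hu]⟩

/-- The stabilizer of an element in the group of units. -/
def EGZ.stab (x : M) : AddSubgroup (AddUnits M) where
  carrier := {u | (u : M) + x = x}
  zero_mem' := by simp
  add_mem' := by
    intro a b ha hb
    simp only [Set.mem_ofPred_eq] at *
    rw [AddUnits.val_add, add_assoc, hb, ha]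
  neg_mem' := by
    intro a ha
    simp only [Set.mem_ofPred_eq] at *
    conv_lhs => rw [← ha]
    rw [← add_assoc, AddUnits.neg_add, zero_add]

theorem EGZ.absorb (z : M) (hz : ∀ a, z + a = z)
    (hnil : ∀ x : M, IsAddUnit x ∨ ∃ n : ℕ, (n + 1) • x = z) (c u : M) (hc : ¬ IsAddUnit c)
    (h : c + u = u) : u = z := by
  obtain ⟨n, hn⟩ := (hnil c).resolve_left hc
  have : ∀ k : ℕ, k • c + u = u := by
    intro k
    induction k with
    | zero => simp
    | succ k ih => rw [succ_nsmul, add_assoc, h, ih]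
  have h1 := this (n + 1)
  rw [hn, hz] at h1
  exact h1.symm

theorem EGZ.upper [Fintype M] (z : M) (hz : ∀ a, z + a = z)
    (hnil : ∀ x : M, IsAddUnit x ∨ ∃ n : ℕ, (n + 1) • x = z) (T : Multiset M)
    (hT : EGZ.DavC M + EGZ.kappa M ≤ T.card + 1) :
    ∃ B W : Multiset M, T = B + W ∧ W.card = EGZ.kappa M ∧ B.sum = T.sum := by
  haveI hdec : DecidablePred (fun c : M => IsAddUnit c) := Classical.decPred _
  haveI hdecQ : ∀ x : M, DecidableEq (AddUnits M ⧸ EGZ.stab x) := fun x => Classical.decEq _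
  by_cases hTz : T.sum = z
  · obtain ⟨B, hB, hBc, hBs⟩ := EGZ.reduce _ T le_rfl
    obtain ⟨C, rfl⟩ := Multiset.le_iff_exists_add.1 hB
    rw [Multiset.card_add] at hT
    obtain ⟨W, hW⟩ : ∃ W, W ∈ Multiset.powersetCard (EGZ.kappa M) C := by
      apply Multiset.card_pos_iff_exists_mem.1
      rw [Multiset.card_powersetCard]
      exact Nat.choose_pos (by omega)
    rw [Multiset.mem_powersetCard] at hW
    obtain ⟨hW, hWc⟩ := hW
    obtain ⟨R, rfl⟩ := Multiset.le_iff_exists_add.1 hW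
    refine ⟨B + R, W, by abel, hWc, ?_⟩
    rw [Multiset.sum_add, hBs, hTz, hz]
  · set x := T.sum with hx
    set TN := T.filter (fun c => ¬ IsAddUnit c) with hTN
    obtain ⟨V, hV⟩ := EGZ.lift_units (T.filter (fun c => IsAddUnit c))
      (fun c hc => (Multiset.mem_filter.1 hc).2)
    have hsplit : V.map (fun u : AddUnits M => (u : M)) + TN = T := by
      rw [hV, hTN, Multiset.filter_add_not]
    have hxs : ((V.sum : AddUnits M) : M) + TN.sum = x := by
      rw [hx, ← EGZ.coe_sum_units, ← Multiset.sum_add, hsplit]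
    have hcards : V.card + TN.card = T.card := by
      rw [← hsplit]; simp
    have hyz : TN.sum ≠ z := by
      intro h
      rw [h, add_comm, hz] at hxs
      exact hTz hxs.symm
    haveI : Fintype (AddUnits M) := Fintype.ofInjective (fun u : AddUnits M => (u : M))
      (fun a b h => AddUnits.ext h)
    let Q := AddUnits M ⧸ EGZ.stab x
    haveI : Fintype Q := Fintype.ofSurjective (QuotientAddGroup.mk : AddUnits M → Q)
      QuotientAddGroup.mk_surjective
    have hmk : ∀ W : Multiset (AddUnits M),
        (W.map (QuotientAddGroup.mk : AddUnits M → Q)).sum = ((W.sum : AddUnits M) : Q) := by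
      intro W
      exact (map_multiset_sum (QuotientAddGroup.mk' (EGZ.stab x)) W).symm
    have hk : ∀ V' : Multiset Q, EGZ.DavC M - TN.card ≤ V'.card →
        ∃ W ≤ V', W ≠ 0 ∧ W.sum = 0 := by
      intro V' hV'
      obtain ⟨V, rfl⟩ := Multiset.map_surjective_of_surjective
        (QuotientAddGroup.mk_surjective (s := EGZ.stab x)) V'
      rw [Multiset.card_map] at hV'
      obtain ⟨B, C, hBC, hC0, hBs⟩ := (EGZ.reducible_iff _).1
        (EGZ.davC_spec (V.map (fun u : AddUnits M => (u : M)) + TN) (by simp; omega))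
      set U := V.map (fun u : AddUnits M => (u : M)) + TN with hU
      have hUs : U.sum = ((V.sum : AddUnits M) : M) + TN.sum := by
        rw [hU, Multiset.sum_add, EGZ.coe_sum_units]
      have hCU : C.sum + U.sum = U.sum := by
        conv_lhs => rw [← hBs]
        rw [add_comm, ← Multiset.sum_add, ← hBC]
      have hUz : U.sum ≠ z := by
        intro h
        apply hyz
        have : ((-V.sum : AddUnits M) : M) + U.sum = TN.sum := by
          rw [hUs, ← add_assoc, AddUnits.neg_add, zero_add]
        rw [← this, h, add_comm, hz]
      have hCu : ∀ c ∈ C, IsAddUnit c := by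
        intro c hc
        by_contra hcn
        obtain ⟨C', rfl⟩ := Multiset.exists_cons_of_mem hc
        rw [Multiset.sum_cons] at hCU
        exact hUz (EGZ.absorb z hz hnil _ _ (fun h => hcn (isAddUnit_of_add_isAddUnit_left h)) hCU)
      have hCV : C ≤ V.map (fun u : AddUnits M => (u : M)) := by
        have h1 : C.filter (fun c => IsAddUnit c) ≤ U.filter (fun c => IsAddUnit c) :=
          Multiset.filter_le_filter _ (by rw [hBC]; exact Multiset.le_add_left _ _)
        rw [Multiset.filter_eq_self.2 hCu, hU, Multiset.filter_add] at h1
        have h2 : TN.filter (fun c => IsAddUnit c) = 0 :=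
          Multiset.filter_eq_nil.2 fun c hc => (Multiset.mem_filter.1 hc).2
        rw [h2, add_zero] at h1
        exact h1.trans (Multiset.filter_le _ _)
      obtain ⟨W, hW, rfl⟩ := exists_map_of_le_map _ _ _ hCV
      refine ⟨W.map QuotientAddGroup.mk, Multiset.map_le_map hW, ?_, ?_⟩
      · intro h
        apply hC0
        rw [Multiset.map_eq_zero.1 h]; rfl
      · rw [hmk, QuotientAddGroup.eq_zero_iff]
        change ((W.sum : AddUnits M) : M) + x = x
        rw [EGZ.coe_sum_units, hUs] at hCU
        have hy : ((W.sum : AddUnits M) : M) + TN.sum = TN.sum := by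
          have := congrArg (fun t => ((-V.sum : AddUnits M) : M) + t) hCU
          rwa [add_left_comm (W.sum : M), ← add_assoc, AddUnits.neg_add, zero_add, ← add_assoc,
            AddUnits.neg_add, zero_add] at this
        rw [← hxs, add_left_comm, hy]
    have hkpos : 0 < EGZ.DavC M - TN.card := by
      by_contra h0
      obtain ⟨W, hW, hW0, _⟩ := hk 0 (by simp; omega)
      exact hW0 (by simpa using hW)
    have hcQ : Fintype.card Q ≤ EGZ.kappa M := by
      refine le_trans ?_ (EGZ.card_le_kappa (M := M))
      refine le_trans (Fintype.card_le_of_surjective (QuotientAddGroup.mk : AddUnits M → Q)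
        QuotientAddGroup.mk_surjective) ?_
      exact Fintype.card_le_of_injective (fun u : AddUnits M => (u : M))
        (fun a b h => AddUnits.ext h)
    obtain ⟨W', hW', hWc, hWs⟩ := gao (Q := Q) _ (EGZ.kappa M) hk hcQ (by
      intro q
      obtain ⟨u, rfl⟩ := QuotientAddGroup.mk_surjective q
      rw [← QuotientAddGroup.mk_nsmul, EGZ.kappa_smul]; rfl) (V.map QuotientAddGroup.mk)
      (by rw [Multiset.card_map]; omega)
    obtain ⟨W, hW, rfl⟩ := exists_map_of_le_map _ _ _ hW'
    rw [hmk, QuotientAddGroup.eq_zero_iff] at hWs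
    change ((W.sum : AddUnits M) : M) + x = x at hWs
    rw [Multiset.card_map] at hWc
    obtain ⟨R, rfl⟩ := Multiset.le_iff_exists_add.1 hW
    refine ⟨R.map (fun u : AddUnits M => (u : M)) + TN, W.map (fun u : AddUnits M => (u : M)), ?_, by simpa using hWc, ?_⟩
    · rw [← hsplit, Multiset.map_add]; abel
    · have hb : ((W.sum : AddUnits M) : M) + (R.map (fun u : AddUnits M => (u : M)) + TN).sum = x := by
        rw [← hxs, Multiset.sum_add, EGZ.coe_sum_units, Multiset.sum_add, AddUnits.val_add, add_assoc]
      rw [← hb] at hWs ⊢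
      exact ((AddUnits.add_right_inj _).1 hWs).symm

theorem EGZ.main [Fintype M] (z : M) (hz : ∀ a, z + a = z)
    (hnil : ∀ x : M, IsAddUnit x ∨ ∃ n : ℕ, (n + 1) • x = z) :
    EGZ.EC M = EGZ.DavC M + EGZ.kappa M - 1 := by
  classical
  have hD := EGZ.davC_pos (M := M)
  have hK : 0 < EGZ.kappa M :=
    lt_of_lt_of_le (Fintype.card_pos_iff.2 ⟨z⟩) (EGZ.card_le_kappa (M := M))
  have hmem : EGZ.DavC M + EGZ.kappa M - 1 ∈ {ℓ : ℕ | 0 < ℓ ∧ ∀ T : Multiset M,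
      ℓ ≤ Multiset.card T → ∃ B : Multiset M, B ≤ T ∧
        Multiset.card T - Multiset.card B = EGZ.kappa M ∧ EGZ.EqSum B T} := by
    refine ⟨by omega, fun T hT => ?_⟩
    obtain ⟨B, W, rfl, hW, hs⟩ := EGZ.upper z hz hnil T (by omega)
    refine ⟨B, Multiset.le_add_right _ _, ?_, (EGZ.eqSum_iff_s11 _ _).2 hs⟩
    rw [Multiset.card_add]; omega
  apply le_antisymm
  · exact Nat.sInf_le hmem
  · refine le_csInf ⟨_, hmem⟩ ?_
    rintro ℓ ⟨_, hℓ⟩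
    by_contra hlt
    obtain ⟨T, hTc, hT⟩ := EGZ.exists_irreducible (M := M)
    obtain ⟨B, hB, hBc, hBs⟩ := hℓ (T + Multiset.replicate (EGZ.kappa M - 1) 0)
      (by rw [Multiset.card_add, Multiset.card_replicate]; omega)
    rw [EGZ.eqSum_iff_s11, Multiset.sum_add, Multiset.sum_replicate, nsmul_zero, add_zero] at hBs
    rw [Multiset.card_add, Multiset.card_replicate] at hBc
    apply hT
    have hle : B - T ≤ Multiset.replicate (EGZ.kappa M - 1) 0 := by
      rw [tsub_le_iff_left]; exact hB
    obtain ⟨n, _, hn⟩ := Multiset.le_replicate_iff.1 hle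
    refine ⟨B ∩ T, lt_of_le_of_ne Multiset.inter_le_right ?_, ?_⟩
    · intro h
      have h1 : T ≤ B := by rw [← h]; exact Multiset.inter_le_left
      have := Multiset.card_le_card h1
      omega
    · rw [EGZ.eqSum_iff_s11, ← hBs]
      have h2 : B - T + B ∩ T = B := Multiset.sub_add_inter B T
      conv_rhs => rw [← h2, Multiset.sum_add, hn, Multiset.sum_replicate, nsmul_zero, zero_add]

end MonoidPart

/-- For a finite elementary semigroup `S = G ∪ N`,
`E(S) = D(S) + κ(S) − 1`. -/
theorem E_eq_of_elementary (S : Type) [AddCommSemigroup S] [Fintype S]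
    (G N : Set S) (hel : IsElementary S G N) :
    EGZ.EC S = EGZ.DavC S + EGZ.kappa S - 1 := by
  obtain ⟨hcov, _, _, ⟨e, heG, he, hinv⟩, _, ⟨z, _, hz, hnil⟩⟩ := hel
  letI : AddCommMonoid S :=
    { (inferInstance : AddCommSemigroup S) with
      zero := e
      zero_add := he
      add_zero := fun a => (add_comm a e).trans (he a)
      nsmul := @nsmulRec S ⟨e⟩ _
      nsmul_zero := fun _ => rfl
      nsmul_succ := fun _ _ => rfl }
  refine EGZ.main z hz fun x => ?_
  rcases hcov x with hx | hx
  · obtain ⟨b, _, hb⟩ := hinv x hx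
    exact Or.inl (IsAddUnit.of_add_eq_zero b hb)
  · obtain ⟨n, hn⟩ := hnil x hx
    exact Or.inr ⟨n, by rw [← EGZ.rep_eq_s11]; exact hn⟩
end

section
/- Let S be a finite archimedean commutative semigroup with unique idempotent e, kernel K = e + S, and Rees quotient nilsemigroup N = S/K. If both K and N are nontrivial (each has more than one element), then D(S) ≥ max(D(N), D(K) + 1). -/
/-- A commutative semigroup `S` is archimedean: for any `a, b ∈ S` there exist
`m, n > 0` and `x, y ∈ S` with `m·a = b + x` and `n·b = a + y`
(here `EGZ.rep a m = (m+1)·a`, so `m` ranging over `ℕ` gives all positive multiples). -/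
def IsArchimedean (S : Type) [AddCommSemigroup S] : Prop :=
  ∀ a b : S, (∃ m : ℕ, ∃ x : S, EGZ.rep a m = b + x) ∧
    (∃ n : ℕ, ∃ y : S, EGZ.rep b n = a + y)

theorem mSum_add_aux {S : Type} [AddCommSemigroup S] (A B : Multiset S) :
    EGZ.mSum (A + B) = EGZ.mSum A + EGZ.mSum B := by
  simp [EGZ.mSum]

theorem mSum_cons_aux {S : Type} [AddCommSemigroup S] (a : S) (B : Multiset S) :
    EGZ.mSum (a ::ₘ B) = (a : WithZero S) + EGZ.mSum B := by
  simp [EGZ.mSum]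

/-- the sum of a nonempty sequence is a genuine element -/
theorem mSum_ne_aux {S : Type} [AddCommSemigroup S] (B : Multiset S) :
    B ≠ 0 → ∃ s : S, EGZ.mSum B = (s : WithZero S) := by
  induction B using Multiset.induction_on with
  | empty => intro h; exact absurd rfl h
  | cons a B ih =>
    intro _
    rw [mSum_cons_aux]
    by_cases hB : B = 0
    · exact ⟨a, by simp [hB, EGZ.mSum]⟩
    · obtain ⟨s, hs⟩ := ih hB
      exact ⟨a + s, by rw [hs]; rfl⟩

theorem mSum_map_aux {S Q : Type} [AddCommSemigroup S] [AddCommSemigroup Q] (π : S → Q)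
    (hhom : ∀ a b : S, π (a + b) = π a + π b) (B : Multiset S) :
    EGZ.mSum (B.map π) = Option.map π (EGZ.mSum B) := by
  induction B using Multiset.induction_on with
  | empty => rfl
  | cons a B ih =>
    rw [Multiset.map_cons, mSum_cons_aux, mSum_cons_aux, ih]
    cases h : EGZ.mSum B with
    | zero => rfl
    | coe s => exact congrArg some (hhom a s).symm

theorem davC_mem_aux (S : Type) [AddCommSemigroup S] [Fintype S] :
    ∀ T : Multiset S, EGZ.DavC S ≤ Multiset.card T → EGZ.Reducible T := by
  have : (EGZ.DavC S) ∈ {ℓ : ℕ | ∀ T : Multiset S, ℓ ≤ Multiset.card T → EGZ.Reducible T} := by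
    apply Nat.sInf_mem
    have : Finite (WithZero S) := inferInstanceAs (Finite (Option S))
    have := Fintype.ofFinite (WithZero S)
    refine ⟨Fintype.card (WithZero S), ?_⟩
    intro T hT
    induction T using Quotient.inductionOn with
    | _ l =>
    have hT' : Fintype.card (WithZero S) ≤ l.length := hT
    obtain ⟨i, j, hij, hf⟩ := Fintype.exists_ne_map_eq_of_card_lt
      (fun i : Fin (l.length + 1) => EGZ.mSum (l.take i : Multiset S)) (by simp; omega)
    wlog hlt : i < j generalizing i j
    · exact this j i hij.symm hf.symm (lt_of_le_of_ne (not_lt.mp hlt) hij.symm)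
    have hl : (l : Multiset S) = (l.take j : Multiset S) + (l.drop j : Multiset S) := by
      rw [Multiset.coe_add, List.take_append_drop]
    have hlt' : (i : ℕ) < j := hlt
    refine ⟨(l.take i : Multiset S) + (l.drop j : Multiset S), lt_of_le_of_ne ?_ ?_, Or.inl ?_⟩
    · change _ ≤ (l : Multiset S)
      rw [hl]
      gcongr
      exact (List.take_sublist_take_left hlt'.le).subperm
    · intro h
      have h2 := congrArg Multiset.card h
      have := j.2
      simp at h2
      omega
    · change _ = EGZ.mSum (l : Multiset S)
      rw [hl, mSum_add_aux, mSum_add_aux]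
      rw [hf]
  exact this

theorem rep_idem_aux {S : Type} [AddCommSemigroup S] (e : S) (he : e + e = e) (n : ℕ) :
    EGZ.rep e n = e := by
  induction n with
  | zero => rfl
  | succ n ih => rw [EGZ.rep, ih, he]

/-- Let `S` be a finite archimedean commutative semigroup with unique
idempotent `e`, kernel `K = e + S` (an abelian group with identity `e`), and Rees quotient
nilsemigroup `N = S/K`, presented as a finite commutative semigroup `Q` with a surjective
additive map `π : S → Q` whose kernel congruence is the Rees congruence of `K`.  If both
`K` and `N` are nontrivial, then `D(S) ≥ max(D(N), D(K) + 1)`, where the classical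
Davenport constant `D(K)` of the group `K` is the smallest `d` such that every sequence of
at least `d` elements of `K` has a nonempty subsequence with sum `e` (the zero of `K`). -/
theorem davenport_ge_max (S Q : Type) [AddCommSemigroup S] [Fintype S]
    [AddCommSemigroup Q] [Fintype Q]
    (harch : IsArchimedean S)
    (e : S) (he : e + e = e) (huniq : ∀ f : S, f + f = f → f = e)
    (K : Set S) (hK : K = {s : S | ∃ x : S, s = e + x})
    (π : S → Q) (hsurj : Function.Surjective π)
    (hhom : ∀ a b : S, π (a + b) = π a + π b)
    (hker : ∀ a b : S, π a = π b ↔ (a = b ∨ (a ∈ K ∧ b ∈ K)))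
    (hKnontriv : ∃ k ∈ K, k ≠ e) (hNnontriv : ∃ s : S, s ∉ K)
    (DK : ℕ)
    (hDK : DK = sInf {d : ℕ | ∀ W : Multiset S, (∀ w ∈ W, w ∈ K) →
      d ≤ Multiset.card W →
      ∃ B : Multiset S, B ≤ W ∧ B ≠ 0 ∧ EGZ.mSum B = (e : WithZero S)}) :
    max (EGZ.DavC Q) (DK + 1) ≤ EGZ.DavC S := by
  have hSmem := davC_mem_aux S
  -- `S` has no identity element
  have hnoid : ∀ f : S, ¬ ∀ a : S, f + a = a := by
    intro f hf
    have hfe := huniq f (hf f)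
    obtain ⟨s, hs⟩ := hNnontriv
    apply hs
    rw [hK]
    exact ⟨s, by rw [← hfe, hf]⟩
  have hred : ∀ T : Multiset S, EGZ.DavC S ≤ Multiset.card T →
      ∃ B, B < T ∧ EGZ.mSum B = EGZ.mSum T := by
    intro T hT
    obtain ⟨B, hB, h | ⟨f, hf, _⟩⟩ := hSmem T hT
    · exact ⟨B, hB, h⟩
    · exact absurd hf (hnoid f)
  have heK : ∀ k ∈ K, e + k = k := by
    intro k hk
    rw [hK] at hk
    obtain ⟨x, rfl⟩ := hk
    rw [← add_assoc, he]
  have hid : ∀ C : Multiset S, C ≠ 0 → (∀ c ∈ C, c ∈ K) →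
      (e : WithZero S) + EGZ.mSum C = EGZ.mSum C := by
    intro C hC hCK
    obtain ⟨c, hc⟩ := Multiset.exists_mem_of_ne_zero hC
    obtain ⟨C', rfl⟩ := Multiset.exists_cons_of_mem hc
    rw [mSum_cons_aux, ← add_assoc]
    congr 1
    exact congrArg some (heK c (hCK c hc))
  apply max_le
  · apply Nat.sInf_le
    intro T hT
    obtain ⟨g, hg⟩ := hsurj.hasRightInverse
    obtain ⟨B, hB, h⟩ := hred (T.map g) (by simpa using hT)
    have hTT : (T.map g).map π = T := by
      rw [Multiset.map_map]
      conv_rhs => rw [← Multiset.map_id T]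
      exact Multiset.map_congr rfl (fun x _ => hg x)
    refine ⟨B.map π, ?_, Or.inl ?_⟩
    · have h1 := Multiset.map_lt_map (f := π) hB
      rwa [hTT] at h1
    · conv_rhs => rw [← hTT]
      rw [mSum_map_aux π hhom, mSum_map_aux π hhom, h]
  · have hpos : 1 ≤ EGZ.DavC S := by
      by_contra hlt
      obtain ⟨B, hB, -⟩ := hred 0 (by simp; omega)
      exact absurd hB (not_lt_bot (a := B))
    suffices hle : DK ≤ EGZ.DavC S - 1 by omega
    rw [hDK]
    apply Nat.sInf_le
    intro W hWK hW
    obtain ⟨g, hgK, hg⟩ : ∃ g ∈ K, (g : WithZero S) + EGZ.mSum W = (e : WithZero S) := by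
      by_cases h0 : W = 0
      · exact ⟨e, by rw [hK]; exact ⟨e, he.symm⟩, by simp [h0, EGZ.mSum]⟩
      · obtain ⟨a, ha⟩ := mSum_ne_aux W h0
        obtain ⟨n, y, hy⟩ := (harch a e).2
        rw [rep_idem_aux e he] at hy
        refine ⟨e + y, by rw [hK]; exact ⟨y, rfl⟩, ?_⟩
        rw [ha]
        refine congrArg some ?_
        change e + y + a = e
        rw [add_assoc, add_comm y a, ← hy, he]
    obtain ⟨B, hB, h⟩ := hred (g ::ₘ W) (by simp; omega)
    rw [mSum_cons_aux, hg] at h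
    obtain ⟨C, hC⟩ := Multiset.le_iff_exists_add.mp hB.le
    have hB0 : B ≠ 0 := by
      rintro rfl
      exact absurd h (by simp [EGZ.mSum])
    have hC0 : C ≠ 0 := by
      rintro rfl
      rw [add_zero] at hC
      exact hB.ne hC.symm
    have hCK : ∀ c ∈ C, c ∈ K := by
      intro c hc
      have : c ∈ g ::ₘ W := by rw [hC]; exact Multiset.mem_add.mpr (Or.inr hc)
      rcases Multiset.mem_cons.mp this with rfl | h
      · exact hgK
      · exact hWK c h
    have hCs : EGZ.mSum C = (e : WithZero S) := by
      have h1 := congrArg EGZ.mSum hC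
      rw [mSum_cons_aux, hg, mSum_add_aux, h, hid C hC0 hCK] at h1
      exact h1.symm
    have hgm : g ∈ B + C := by rw [← hC]; exact Multiset.mem_cons_self g W
    rcases Multiset.mem_add.mp hgm with hm | hm
    · obtain ⟨B', rfl⟩ := Multiset.exists_cons_of_mem hm
      rw [Multiset.cons_add, Multiset.cons_inj_right] at hC
      exact ⟨C, by rw [hC]; exact Multiset.le_add_left _ _, hC0, hCs⟩
    · obtain ⟨C', rfl⟩ := Multiset.exists_cons_of_mem hm
      rw [Multiset.add_cons, Multiset.cons_inj_right] at hC
      exact ⟨B, by rw [hC]; exact Multiset.le_add_right _ _, hB0, h⟩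
end
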